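/- arXiv:2509.18673 — 2 statements merged into one kernel-verified Lean document; each statement's English description precedes it below -/
import Mathlib

section
/- For every fair division instance with n agents, m indivisible items and additive valuations, in which every item is a good (valued strictly positively by all agents), a chore (valued strictly negatively by all agents), or a nonnegatively-valued item (valued nonnegatively by all agents, strictly positively by at least one agent, and zero by at least one agent), there exists an allocation that is simultaneously IEF1 and Pareto optimal. -/
/-!
Scale agent `i` by a weight `exp (z i)` and let each item go to an agent whose scaled value for it
is largest. Any such allocation maximises a positively weighted sum of utilities, so it is Pareto
optimal. It remains to find weights and a way of breaking ties that give IEF1.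

For each agent `i`, consider the closed set of those `z` for which `i` can be made the agent with
the largest scaled bundle value (or for which `i` likes no item and has too large a weight to
receive any). A Knaster–Kuratowski–Mazurkiewicz argument on the hyperplane `∑ i, z i = 0` yields a
`z` lying in all these sets. It rests on a Sperner lemma for the alcoves of the affine Weyl group of
type `A`, where a determinant over `ZMod 2` counts the fully labelled alcoves modulo 2.

If the logarithms of the nonzero values are linearly independent over `ℚ`, then at every `z` the
graph of ties between agents and items has no cycle, since a cycle would give a multiplicative
relation. Over a forest, ties can be broken so that, at the market prices, each agent that can
receive anything is one item away from a bundle dominating all others. General instances are limits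
of generic ones, and the conclusion is a closed condition once `z` is confined to a ball.
-/

open Finset

/-- Value of a bundle under an additive valuation. -/
def bval {α : Type*} (u : α → ℝ) (S : Finset α) : ℝ := ∑ j ∈ S, u j

/-- An allocation: every item belongs to exactly one agent's bundle. -/
def IsAlloc {n m : ℕ} (A : Fin n → Finset (Fin m)) : Prop :=
  ∀ j : Fin m, ∃! i : Fin n, j ∈ A i

/-- IEF1: each agent `i` can remove or (hypothetically) add a single item to its own
bundle so that it does not envy any other bundle. -/
def IEF1 {n m : ℕ} (u : Fin n → Fin m → ℝ) (A : Fin n → Finset (Fin m)) : Prop :=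
  ∀ i : Fin n, ∃ S : Finset (Fin m), S.card ≤ 1 ∧
    ∀ j : Fin n, bval (u i) (A j) ≤ bval (u i) (symmDiff (A i) S)

/-- Pareto optimality: no allocation weakly improves all agents and strictly improves one. -/
def ParetoOptimal {n m : ℕ} (u : Fin n → Fin m → ℝ) (A : Fin n → Finset (Fin m)) : Prop :=
  ¬ ∃ B : Fin n → Finset (Fin m), IsAlloc B ∧
      (∀ i, bval (u i) (A i) ≤ bval (u i) (B i)) ∧
      ∃ a, bval (u a) (A a) < bval (u a) (B a)

theorem add_one_ediv_of_not_dvd {a b : ℤ} (hb : 0 < b) (h : ¬ b ∣ a + 1) : (a + 1) / b = a / b := by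
  have hmod : a % b ≠ b - 1 := fun h' => h (Int.dvd_of_emod_eq_zero (by
    rw [Int.add_emod, h']; simp))
  have hlt := Int.emod_lt_of_pos a hb
  have hnn := Int.emod_nonneg a hb.ne'
  have := Int.mul_ediv_add_emod a b
  rw [Int.ediv_eq_iff_of_pos hb]
  constructor <;> nlinarith [hlt.le, (by omega : a % b + 1 < b)]

theorem abs_le_of_sum_eq {ι R : Type*} [Fintype ι] [CommRing R] [LinearOrder R]
    [IsStrictOrderedRing R] {x y : ι → R} {c d : R} (hsum : ∑ i, x i = ∑ i, y i)
    (hx : ∀ i j, x j ≤ x i + c) (hy : ∀ i, |y i| ≤ d) (i : ι) : |x i| ≤ c + d := by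
  have hne : (univ : Finset ι).Nonempty := ⟨i, mem_univ i⟩
  obtain ⟨p, -, hp⟩ := exists_le_of_sum_le hne hsum.le
  obtain ⟨q, -, hq⟩ := exists_le_of_sum_le hne hsum.ge
  have := abs_le.1 (hy p)
  have := abs_le.1 (hy q)
  exact abs_le.2 ⟨by linarith [hx i q], by linarith [hx p i]⟩

theorem norm_le_of_sum_eq_zero {ι : Type*} [Fintype ι] [Nonempty ι] {x : ι → ℝ} {c : ℝ}
    (hsum : ∑ i, x i = 0) (hx : ∀ i j, x j ≤ x i + c) : ‖x‖ ≤ c :=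
  (pi_norm_le_iff_of_nonempty _).2 fun i => by
    simpa using abs_le_of_sum_eq (y := 0) (d := 0) (by simpa using hsum) hx (by simp) i

section Matrix

open Matrix

variable {ι R : Type*} [Fintype ι] [DecidableEq ι] [CommRing R]

theorem det_eq_sum_adjugate {A : Matrix ι ι R} (h : A *ᵥ 1 = 1) (i : ι) :
    A.det = ∑ k, A.adjugate i k := by
  have : A.adjugate *ᵥ (A *ᵥ 1) = A.det • 1 := by
    rw [mulVec_mulVec, adjugate_mul, smul_mulVec, one_mulVec]
  rw [h] at this
  simpa [mulVec, dotProduct] using (congrFun this i).symm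

theorem adjugate_congr {A B : Matrix ι ι R} {k : ι} (h : ∀ l ≠ k, A l = B l) (i : ι) :
    A.adjugate i k = B.adjugate i k := by
  rw [adjugate_apply, adjugate_apply]
  congr 1
  ext l j
  obtain rfl | hl := eq_or_ne l k
  · simp
  · simp [updateRow_ne hl, h l hl]

end Matrix

/-! ### Alcoves -/

/-- An alcove of the affine Weyl group of type `A`, in dimension `n - 1`. It is encoded by the
window of the corresponding affine permutation: integers in distinct residue classes modulo `n`,
with normalised sum. Alcoves are the cells of the triangulation for which Sperner's lemma is
proved. -/
@[ext]
structure Alcove (n : ℕ) where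
  window : Fin n → ℤ
  injective_window : Function.Injective fun i => (window i : ZMod n)
  sum_window : ∑ i, window i = ∑ i : Fin n, (i : ℤ)

namespace Alcove

variable {n : ℕ}

/-- The `k`-th vertex of an alcove, in integer coordinates. The sum of the coordinates of the `k`-th
vertex is `k`; to return to the hyperplane of sum zero, subtract `k / n` from each coordinate. -/
def vertex (T : Alcove n) (k i : Fin n) : ℤ := (T.window i + k) / n

/-- The change made to an integer of residue `r` when the residues `a` and `a + 1` are swapped by
moving each by one. -/
def swapStep (a r : ZMod n) : ℤ :=
  (if r = a then 1 else 0) - if r = a + 1 then 1 else 0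

theorem add_swapStep (a r : ZMod n) : r + (swapStep a r : ℤ) = Equiv.swap a (a + 1) r := by
  rw [swapStep, Equiv.swap_apply_def]
  split_ifs with ha hb hb
  · simp [← hb, ha]
  · simp [ha]
  · simp [hb]
  · simp

theorem swapStep_swap (a r : ZMod n) : swapStep a (Equiv.swap a (a + 1) r) = -swapStep a r := by
  simp only [swapStep, Equiv.swap_apply_eq_iff, Equiv.swap_apply_left, Equiv.swap_apply_right,
    neg_sub]

variable [NeZero n]

theorem bijective_window (T : Alcove n) :
    Function.Bijective fun i => (T.window i : ZMod n) :=
  (Fintype.bijective_iff_injective_and_card _).2 ⟨T.injective_window, by simp [ZMod.card]⟩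

/-- The alcove on the other side of the facet opposite the `k`-th vertex. Only the window entries
of residue `-k - 1` and `-k` modulo `n`, between which the floor defining the `k`-th vertex jumps,
change. -/
def flip (k : Fin n) (T : Alcove n) : Alcove n where
  window i := T.window i + swapStep (-k - 1 : ZMod n) (T.window i)
  injective_window := by
    simp only [Int.cast_add, add_swapStep]
    exact (Equiv.injective _).comp T.injective_window
  sum_window := by
    have : ∑ i, swapStep (-k - 1 : ZMod n) (T.window i) =
        ∑ r : ZMod n, swapStep (-k - 1 : ZMod n) r :=
      T.bijective_window.sum_comp (swapStep _)
    rw [sum_add_distrib, T.sum_window, this]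
    simp [swapStep]

theorem flip_flip (k : Fin n) (T : Alcove n) : (T.flip k).flip k = T := by
  ext i
  simp only [flip, Int.cast_add, add_swapStep, swapStep_swap, add_neg_cancel_right]

theorem flip_ne (hn : 1 < n) (k : Fin n) (T : Alcove n) : T.flip k ≠ T := by
  have : Fact (1 < n) := ⟨hn⟩
  intro h
  obtain ⟨i, hi : (T.window i : ZMod n) = -k⟩ := T.bijective_window.2 (-k)
  have := congrFun (congrArg window h) i
  have hk : (-k : ZMod n) ≠ -k - 1 := by simp [sub_eq_add_neg]
  simp [flip, hi, hk, swapStep] at this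

theorem vertex_flip_of_ne {k l : Fin n} (hl : l ≠ k) (T : Alcove n) :
    (T.flip k).vertex l = T.vertex l := by
  have hn : (0 : ℤ) < n := mod_cast Nat.pos_of_neZero n
  have cast_ne : (l : ZMod n) ≠ k := fun h => hl <| Fin.ext <| by
    simpa [ZMod.natCast_eq_natCast_iff', Nat.mod_eq_of_lt] using h
  ext i
  simp only [vertex, flip, swapStep, sub_add_cancel]
  split_ifs with h₁ h₂ h₂
  · simp
  · rw [sub_zero, add_right_comm]
    refine add_one_ediv_of_not_dvd hn fun hd => cast_ne ?_
    have := (ZMod.intCast_zmod_eq_zero_iff_dvd _ n).2 hd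
    push_cast [h₁] at this
    linear_combination this
  · rw [zero_sub]
    conv_rhs => rw [show T.window i + l = T.window i + -1 + l + 1 by ring]
    refine (add_one_ediv_of_not_dvd hn fun hd => cast_ne ?_).symm
    have := (ZMod.intCast_zmod_eq_zero_iff_dvd _ n).2 hd
    push_cast [h₂] at this
    linear_combination this
  · simp

theorem finite_setOf_vertex_mem {D : Set (Fin n → ℤ)} (hD : D.Finite) :
    {T : Alcove n | ∃ k, T.vertex k ∈ D}.Finite := by
  have hn : (0 : ℤ) < n := mod_cast Nat.pos_of_neZero n
  have hwindow : Function.Injective (window (n := n)) := fun S T h => Alcove.ext h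
  have hbox := hD.biUnion fun x _ => Set.finite_Icc (fun i => n * x i - n) fun i => n * x i + n
  refine (hbox.preimage hwindow.injOn).subset ?_
  rintro T ⟨k, hk⟩
  refine Set.mem_biUnion hk ⟨fun i => ?_, fun i => ?_⟩
  · have := Int.mul_ediv_self_le (x := T.window i + k) hn.ne'
    have : (k : ℤ) < n := mod_cast k.2
    simp only [vertex]; linarith
  · have := Int.lt_mul_ediv_self_add (x := T.window i + k) hn
    simp only [vertex]; linarith

end Alcove

/-! ### Sperner's lemma -/

namespace Alcove

variable {n : ℕ}

/-- The matrix whose `k`-th row is the indicator of the label of the `k`-th vertex. Modulo 2, its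
determinant detects whether all labels occur. -/
def labelMatrix (lab : (Fin n → ℤ) → Fin n) (T : Alcove n) : Matrix (Fin n) (Fin n) (ZMod 2) :=
  (1 : Matrix (Fin n) (Fin n) (ZMod 2)).submatrix (fun k => lab (T.vertex k)) id

theorem labelMatrix_apply (lab : (Fin n → ℤ) → Fin n) (T : Alcove n) (k i : Fin n) :
    T.labelMatrix lab k i = if lab (T.vertex k) = i then 1 else 0 :=
  Matrix.one_apply

/-- An alcove is fully labelled if each label occurs at one of its vertices. -/
def IsFullyLabelled (lab : (Fin n → ℤ) → Fin n) (T : Alcove n) : Prop :=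
  Function.Surjective fun k => lab (T.vertex k)

theorem det_labelMatrix_eq_one {lab : (Fin n → ℤ) → Fin n} {T : Alcove n}
    (h : T.IsFullyLabelled lab) : (T.labelMatrix lab).det = 1 := by
  let σ : Equiv.Perm (Fin n) := Equiv.ofBijective _ ⟨Finite.injective_iff_surjective.2 h, h⟩
  have hdet : (T.labelMatrix lab).det = (σ.sign : ℤ) :=
    (Matrix.det_permute σ 1).trans (by simp)
  rcases Int.units_eq_one_or σ.sign with hσ | hσ <;> simp [hdet, hσ]

theorem isFullyLabelled_of_det_ne_zero {lab : (Fin n → ℤ) → Fin n} {T : Alcove n}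
    (h : (T.labelMatrix lab).det ≠ 0) : T.IsFullyLabelled lab := by
  intro i
  by_contra! hi
  exact h (Matrix.det_eq_zero_of_column_eq_zero i fun k => by
    simp [labelMatrix_apply, hi k])

theorem labelMatrix_mulVec_one (lab : (Fin n → ℤ) → Fin n) (T : Alcove n) :
    (T.labelMatrix lab).mulVec 1 = 1 := by
  ext k
  simp [Matrix.mulVec, dotProduct, labelMatrix_apply]

variable [NeZero n]

theorem sum_det_labelMatrix_congr {lab lab' : (Fin n → ℤ) → Fin n} {D : Set (Fin n → ℤ)}
    (hlab : ∀ x ∉ D, lab x = lab' x) {S : Finset (Alcove n)}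
    (hS : ∀ T k, vertex T k ∈ D → T ∈ S) :
    ∑ T ∈ S, (T.labelMatrix lab).det = ∑ T ∈ S, (T.labelMatrix lab').det := by
  classical
  -- As rows sum to one, each determinant is a sum of cofactors over facets. The difference `d` of
  -- the cofactors is supported on facets meeting `D` and cancels between the two sides of a facet.
  let d (p : Alcove n × Fin n) : ZMod 2 :=
    (p.1.labelMatrix lab).adjugate 0 p.2 + (p.1.labelMatrix lab').adjugate 0 p.2
  have exists_vertex_mem {p} (hp : d p ≠ 0) : ∃ l ≠ p.2, p.1.vertex l ∈ D := by
    contrapose! hp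
    have : (p.1.labelMatrix lab).adjugate 0 p.2 = (p.1.labelMatrix lab').adjugate 0 p.2 :=
      adjugate_congr (fun l hl => by ext; simp only [labelMatrix_apply, hlab _ (hp l hl)]) 0
    simp only [d, this, CharTwo.add_self_eq_zero]
  have d_flip (T : Alcove n) (k) : d (T.flip k, k) = d (T, k) := by
    have h (lab) : ((T.flip k).labelMatrix lab).adjugate 0 k = (T.labelMatrix lab).adjugate 0 k :=
      adjugate_congr (fun l hl => by ext; simp only [labelMatrix_apply, vertex_flip_of_ne hl]) 0
    simp only [d, h]
  have sum_d : ∑ p ∈ S ×ˢ univ with d p ≠ 0, d p = 0 := by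
    refine sum_involution (fun p _ => (p.1.flip p.2, p.2)) ?_ ?_ ?_ ?_
    · rintro ⟨T, k⟩ -
      rw [d_flip, CharTwo.add_self_eq_zero]
    · rintro ⟨T, k⟩ - hd h
      obtain ⟨l, hl, -⟩ := exists_vertex_mem hd
      have : 1 < n := by simpa using Fintype.one_lt_card_iff.2 ⟨l, k, hl⟩
      exact flip_ne this k T (congrArg Prod.fst h)
    · rintro ⟨T, k⟩ hT
      rw [mem_filter] at hT ⊢
      obtain ⟨l, hl, hD⟩ := exists_vertex_mem hT.2
      refine ⟨mk_mem_product (hS _ l ?_) (mem_univ _), (d_flip T k).trans_ne hT.2⟩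
      rwa [vertex_flip_of_ne hl]
    · rintro ⟨T, k⟩ -
      simp only [flip_flip]
  have det_eq (lab) (T : Alcove n) := det_eq_sum_adjugate (T.labelMatrix_mulVec_one lab) 0
  rw [sum_filter_ne_zero, sum_product] at sum_d
  simp only [d, sum_add_distrib, ← det_eq] at sum_d
  exact CharTwo.add_eq_zero.1 sum_d

end Alcove

/-- `i` is the least index at which `x` attains its maximum. This is the model labelling in
Sperner's lemma, for which there is exactly one fully labelled alcove. -/
def IsFirstMax {ι R : Type*} [LT ι] [Preorder R] (x : ι → R) (i : ι) : Prop :=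
  ∀ j, x j ≤ x i ∧ (j < i → x j < x i)

theorem exists_isFirstMax {ι R : Type*} [LinearOrder ι] [Finite ι] [Nonempty ι] [LinearOrder R]
    (x : ι → R) : ∃ i, IsFirstMax x i := by
  obtain ⟨i, hi⟩ := Finite.exists_max fun i => toLex (x i, OrderDual.toDual i)
  refine ⟨i, fun j => ?_⟩
  have := Prod.Lex.toLex_le_toLex.1 (hi j)
  simp only [OrderDual.toDual_le_toDual] at this
  grind

theorem IsFirstMax.eq {ι R : Type*} [LinearOrder ι] [Preorder R] {x : ι → R} {i j : ι}
    (hi : IsFirstMax x i) (hj : IsFirstMax x j) : i = j := by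
  by_contra h
  obtain h | h := lt_or_gt_of_ne h
  · exact ((hj i).2 h).not_ge (hi j).1
  · exact ((hi j).2 h).not_ge (hj i).1

theorem eq_natCast_of_strictMono {n : ℕ} {w : Fin n → ℤ} (hw : StrictMono w)
    (hrange : ∀ i j, w j < w i + n) (hsum : ∑ i, w i = ∑ i : Fin n, (i : ℤ)) (i : Fin n) :
    w i = i := by
  obtain _ | n := n
  · exact i.elim0
  have hmono : Monotone fun i : Fin (n + 1) => w i - i :=
    Fin.monotone_iff_le_succ.2 fun i => by
      have := hw i.castSucc_lt_succ
      push_cast [Fin.val_succ, Fin.val_castSucc]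
      omega
  have hconst (i j : Fin (n + 1)) : w j - j ≤ w i - i + 0 := by
    have := hmono (Fin.zero_le i)
    have := hmono (Fin.le_last j)
    have := hrange 0 (Fin.last n)
    simp at *
    omega
  have := abs_le_of_sum_eq (y := 0) (d := 0) (by simp [hsum]) hconst (by simp) i
  simp at this
  omega

namespace Alcove

variable {n : ℕ} {lab : (Fin n → ℤ) → Fin n} {T : Alcove n}

/-- The alcove of the identity permutation. -/
def fundamental (n : ℕ) : Alcove n where
  window i := i
  injective_window i j h := Fin.ext <| by
    simpa [ZMod.natCast_eq_natCast_iff', Nat.mod_eq_of_lt] using h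
  sum_window := rfl

theorem window_lt_of_isFullyLabelled {M : ℤ} (hlab : ∀ (x : Fin n → ℤ) j, x j ≤ x (lab x) + M)
    (hT : T.IsFullyLabelled lab) (i j : Fin n) : T.window j < T.window i + n * (M + 1) := by
  obtain ⟨k, rfl⟩ := hT i
  have hn : (0 : ℤ) < n := mod_cast k.pos
  have := hlab (T.vertex k) j
  have := Int.mul_ediv_self_le (x := T.window (lab (T.vertex k)) + k) hn.ne'
  have := Int.lt_mul_ediv_self_add (x := T.window j + k) hn
  unfold vertex at *
  nlinarith

theorem abs_vertex_le {M : ℤ} (hlab : ∀ (x : Fin n → ℤ) j, x j ≤ x (lab x) + M)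
    (hT : T.IsFullyLabelled lab) (k i : Fin n) : |T.vertex k i| ≤ M + 3 := by
  have hn : (0 : ℤ) < n := mod_cast k.pos
  have hk : (k : ℤ) < n := mod_cast k.2
  have hwindow := abs_le.1 <| abs_le_of_sum_eq (d := (n : ℤ)) T.sum_window
    (fun i j => (window_lt_of_isFullyLabelled hlab hT i j).le)
    (fun i => by simp) i
  have := Int.mul_ediv_self_le (x := T.window i + k) hn.ne'
  have := Int.lt_mul_ediv_self_add (x := T.window i + k) hn
  unfold vertex
  exact abs_le.2 ⟨by nlinarith, by nlinarith⟩

theorem eq_fundamental_of_isFirstMax (hlab : ∀ x, IsFirstMax x (lab x))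
    (hT : T.IsFullyLabelled lab) : T = fundamental n := by
  have hrange (i j) : T.window j < T.window i + n := by
    simpa using window_lt_of_isFullyLabelled (M := 0) (by simp [fun x j => (hlab x j).1]) hT i j
  have hmono : StrictMono T.window := by
    intro j i hji
    obtain ⟨k, rfl⟩ := hT i
    have := (hlab (T.vertex k) j).2 hji
    contrapose! this
    exact Int.ediv_le_ediv (mod_cast k.pos) (by simpa using this)
  ext i
  exact eq_natCast_of_strictMono hmono hrange T.sum_window i

theorem vertex_fundamental (k i : Fin n) :
    (fundamental n).vertex k i = if (i + k : ℕ) < n then 0 else 1 := by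
  have hi := i.2
  have hk := k.2
  simp only [vertex, fundamental]
  split_ifs with h
  · exact Int.ediv_eq_zero_of_lt (by positivity) (mod_cast h)
  · rw [Int.ediv_eq_iff_of_pos (by omega)]; omega

theorem isFullyLabelled_fundamental (hlab : ∀ x, IsFirstMax x (lab x)) :
    (fundamental n).IsFullyLabelled lab := by
  intro i
  obtain ⟨k, hk⟩ : ∃ k : Fin n, (i + k : ℕ) = if (i : ℕ) = 0 then 0 else n := by
    split_ifs with h
    · exact ⟨⟨0, i.pos⟩, by simpa using h⟩
    · exact ⟨⟨n - i, by omega⟩, by simp⟩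
  refine ⟨k, (hlab _).eq fun j => ?_⟩
  simp only [vertex_fundamental]
  have := i.2; have := j.2
  rw [Fin.lt_def]
  grind

variable [NeZero n]

theorem exists_isFullyLabelled {M : ℤ} (hlab : ∀ (x : Fin n → ℤ) j, x j ≤ x (lab x) + M) :
    ∃ T : Alcove n, T.IsFullyLabelled lab := by
  classical
  have hM : 0 ≤ M := by simpa using hlab 0 0
  choose firstMax hfirstMax using exists_isFirstMax (ι := Fin n) (R := ℤ)
  let D : Finset (Fin n → ℤ) := Icc (fun _ => -(M + 3)) fun _ => M + 3
  -- `lab'` has the parity of `firstMax`, and its fully labelled alcoves have all their vertices in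
  -- the box `D` on which it agrees with `lab`.
  let lab' x := if x ∈ D then lab x else firstMax x
  let S := (finite_setOf_vertex_mem D.finite_toSet).toFinset
  have hS : ∀ T k, vertex T k ∈ (D : Set (Fin n → ℤ)) → T ∈ S := fun T k h => by
    simpa [S] using ⟨k, h⟩
  have fundamental_mem : fundamental n ∈ S := by
    refine hS _ 0 (mem_Icc.2 ⟨fun i => ?_, fun i => ?_⟩) <;> simp [vertex_fundamental] <;> omega
  have sum_firstMax : ∑ T ∈ S, (T.labelMatrix firstMax).det = 1 := by
    rw [sum_eq_single_of_mem _ fundamental_mem,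
      det_labelMatrix_eq_one (isFullyLabelled_fundamental hfirstMax)]
    intro T _ hT
    contrapose! hT
    exact eq_fundamental_of_isFirstMax hfirstMax (isFullyLabelled_of_det_ne_zero hT)
  rw [← sum_det_labelMatrix_congr (lab := lab') (fun x hx => if_neg hx) hS] at sum_firstMax
  obtain ⟨T, -, hdet⟩ := exists_ne_zero_of_sum_ne_zero (sum_firstMax.trans_ne one_ne_zero)
  have hT := isFullyLabelled_of_det_ne_zero hdet
  have hlab' (x : Fin n → ℤ) (j) : x j ≤ x (lab' x) + M := by
    by_cases hx : x ∈ D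
    · simpa [lab', hx] using hlab x j
    · simpa [lab', hx] using (hfirstMax x j).1.trans (le_add_of_nonneg_right hM)
  have vertex_mem (k) : T.vertex k ∈ D :=
    mem_Icc.2 ⟨fun i => (abs_le.1 (abs_vertex_le hlab' hT k i)).1,
      fun i => (abs_le.1 (abs_vertex_le hlab' hT k i)).2⟩
  refine ⟨T, ?_⟩
  simpa [IsFullyLabelled, lab', vertex_mem] using hT

end Alcove

/-! ### A covering lemma -/

section KKM

open Metric

theorem exists_mem_forall_mem_of_forall_dist_le {X ι : Type*} [PseudoMetricSpace X] {K : Set X}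
    (hK : IsCompact K) {D : ι → Set X} (hD : ∀ i, IsClosed (D i))
    (h : ∀ ε > 0, ∃ z ∈ K, ∀ i, ∃ y ∈ D i, dist z y ≤ ε) : ∃ z ∈ K, ∀ i, z ∈ D i := by
  choose z hzK y hyD hdist using fun k : ℕ => h (1 / (k + 1)) Nat.one_div_pos_of_nat
  obtain ⟨x, hx, φ, hφ, hlim⟩ := hK.tendsto_subseq hzK
  refine ⟨x, hx, fun i => (hD i).mem_of_tendsto (f := fun k => y (φ k) i) (b := Filter.atTop) ?_
    (.of_forall fun k => hyD (φ k) i)⟩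
  exact hlim.congr_dist <| squeeze_zero (fun _ => dist_nonneg) (fun k => hdist (φ k) i) <|
    tendsto_one_div_add_atTop_nhds_zero_nat.comp hφ.tendsto_atTop

variable {n : ℕ} [NeZero n] {D : Fin n → Set (Fin n → ℝ)} {R : ℝ}

theorem Alcove.exists_forall_vertex_mem (hcover : ∀ z, ∃ i, z ∈ D i)
    (hD : ∀ i, ∀ z ∈ D i, ∀ j, z j ≤ z i + R) {δ : ℝ} (hδ : 0 < δ) :
    ∃ T : Alcove n, ∀ i, ∃ k, (fun l => δ * T.vertex k l) ∈ D i := by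
  choose lab hlab using fun x : Fin n → ℤ => hcover fun l => δ * x l
  obtain ⟨T, hT⟩ := exists_isFullyLabelled (lab := lab) (M := ⌈R / δ⌉) fun x j => by
    have := hD _ _ (hlab x) j
    have : (x j : ℝ) ≤ x (lab x) + R / δ := by field_simp; linarith
    exact_mod_cast this.trans (add_le_add_right (Int.le_ceil _) _)
  refine ⟨T, fun i => ?_⟩
  obtain ⟨k, rfl⟩ := hT i
  exact ⟨k, hlab _⟩

theorem exists_sum_eq_zero_forall_dist_le (hcover : ∀ z, ∃ i, z ∈ D i)
    (hD : ∀ i, ∀ z ∈ D i, ∀ j, z j ≤ z i + R) {ε : ℝ} (hε : 0 < ε) :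
    ∃ z : Fin n → ℝ, ∑ i, z i = 0 ∧ ∀ i, ∃ y ∈ D i, dist z y ≤ ε := by
  have hn : (0 : ℝ) < n := mod_cast Nat.pos_of_neZero n
  obtain ⟨T, hT⟩ := Alcove.exists_forall_vertex_mem hcover hD (half_pos hε)
  have hsum : ∑ i, (T.window i : ℝ) = ∑ i : Fin n, (i : ℝ) := mod_cast T.sum_window
  refine ⟨fun i => ε / 2 * ((T.window i - i) / n), ?_, fun i => ?_⟩
  · rw [← mul_sum, ← sum_div, sum_sub_distrib, hsum, sub_self, zero_div, mul_zero]
  obtain ⟨k, hk⟩ := hT i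
  refine ⟨_, hk, (dist_pi_le_iff hε.le).2 fun l => ?_⟩
  have hl : (l : ℝ) < n := mod_cast l.2
  have hkn : (k : ℝ) < n := mod_cast k.2
  have hlow : (n * T.vertex k l : ℝ) ≤ T.window l + k :=
    mod_cast Int.mul_ediv_self_le (x := T.window l + k) (by exact_mod_cast hn.ne')
  have hupp : (T.window l + k : ℝ) < n * T.vertex k l + n :=
    mod_cast Int.lt_mul_ediv_self_add (x := T.window l + k) (by exact_mod_cast hn)
  have hdist : |(T.window l - l) / n - (T.vertex k l : ℝ)| ≤ 2 := by
    rw [abs_le, le_sub_iff_add_le, sub_le_iff_le_add, le_div_iff₀ hn, div_le_iff₀ hn]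
    constructor <;> nlinarith [(l : ℕ).cast_nonneg (α := ℝ), (k : ℕ).cast_nonneg (α := ℝ)]
  rw [Real.dist_eq, ← mul_sub, abs_mul, abs_of_pos (half_pos hε)]
  linarith [mul_le_mul_of_nonneg_left hdist (half_pos hε).le]

theorem exists_sum_eq_zero_forall_mem (hclosed : ∀ i, IsClosed (D i))
    (hcover : ∀ z, ∃ i, z ∈ D i) (hD : ∀ i, ∀ z ∈ D i, ∀ j, z j ≤ z i + R) :
    ∃ z : Fin n → ℝ, ∑ i, z i = 0 ∧ ∀ i, z ∈ D i := by
  have hcompact : IsCompact ({z : Fin n → ℝ | ∑ i, z i = 0} ∩ closedBall 0 (R + 2)) :=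
    (isCompact_closedBall _ _).inter_left <| isClosed_eq (by fun_prop) continuous_const
  have happrox (ε : ℝ) (hε : 0 < ε) :
      ∃ z ∈ {z : Fin n → ℝ | ∑ i, z i = 0} ∩ closedBall 0 (R + 2),
        ∀ i, ∃ y ∈ D i, dist z y ≤ ε := by
    obtain ⟨z, hz, hzD⟩ := exists_sum_eq_zero_forall_dist_le hcover hD (lt_min hε one_pos)
    have hspread (i j) : z j ≤ z i + (R + 2) := by
      obtain ⟨y, hy, hzy⟩ := hzD i
      have hzy (l) := abs_le.1 <| (dist_le_pi_dist z y l).trans <| hzy.trans (min_le_right _ _)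
      linarith [hD i y hy j, (hzy i).1, (hzy j).2]
    exact ⟨z, ⟨hz, mem_closedBall_zero_iff.2 (norm_le_of_sum_eq_zero hz hspread)⟩,
      fun i => (hzD i).imp fun y hy => ⟨hy.1, hy.2.trans (min_le_left _ _)⟩⟩
  obtain ⟨z, hz, hzD⟩ := exists_mem_forall_mem_of_forall_dist_le hcompact hclosed happrox
  exact ⟨z, hz.1, hzD⟩

end KKM

/-! ### Rounding an allocation along a cycle-free relation -/

section Rounding

open scoped symmDiff

variable {ι α : Type*}

theorem bval_symmDiff_singleton [DecidableEq α] {P : α → ℝ} {A : Finset α} {j : α}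
    (h : j ∈ A ↔ P j ≤ 0) : bval P (A ∆ {j}) = bval P A + |P j| := by
  by_cases hj : j ∈ A
  · have : A ∆ {j} = A.erase j := by
      ext; simp only [mem_symmDiff, mem_singleton, mem_erase]; grind
    rw [this, bval, bval, ← add_sum_erase A P hj, abs_of_nonpos (h.1 hj)]
    ring
  · have : A ∆ {j} = insert j A := by
      ext; simp only [mem_symmDiff, mem_singleton, mem_insert]; grind
    rw [this, bval, bval, sum_insert hj, abs_of_pos (not_le.1 (hj ∘ h.2)), add_comm]

theorem sum_apply_update {M : Type*} [AddCommGroup M] [Fintype α] [DecidableEq α]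
    (f : α → ι → M) (a : α → ι) (j : α) (i : ι) :
    ∑ x, f x (Function.update a j i x) = ∑ x, f x (a x) + (f j i - f j (a j)) := by
  have : ∑ x ∈ univ.erase j, f x (Function.update a j i x) = ∑ x ∈ univ.erase j, f x (a x) :=
    sum_congr rfl fun x hx => by rw [Function.update_of_ne (ne_of_mem_erase hx)]
  rw [← add_sum_erase _ _ (mem_univ j), this, ← add_sum_erase _ (fun x => f x (a x)) (mem_univ j),
    Function.update_self]
  abel

/-- An order of elimination witnessing that the bipartite graph `E` between agents and items has no
cycle: when `k` is removed, it shares at most one item with the agents that are still present, which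
are those of larger rank. -/
def IsEliminationRank (E : ι → α → Prop) (r : ι → ℕ) : Prop :=
  Function.Injective r ∧ ∀ k, {j | E k j ∧ ∃ l, r k < r l ∧ E l j}.Subsingleton

theorem exists_isEliminationRank_of_leaf [Finite ι] {E : ι → α → Prop}
    (hE : ∀ K : Finset ι, K.Nonempty →
      ∃ k ∈ K, {j | E k j ∧ ∃ l ∈ K, l ≠ k ∧ E l j}.Subsingleton) :
    ∃ r, IsEliminationRank E r := by
  classical
  suffices h : ∀ K : Finset ι, ∃ r : ι → ℕ, Set.InjOn r K ∧
      ∀ k ∈ K, {j | E k j ∧ ∃ l ∈ K, r k < r l ∧ E l j}.Subsingleton by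
    have := Fintype.ofFinite ι
    obtain ⟨r, hr, hr'⟩ := h univ
    exact ⟨r, by simpa [Set.injOn_univ] using hr, by simpa using hr'⟩
  intro K
  induction K using Finset.strongInduction with | H K ih
  obtain rfl | hK := K.eq_empty_or_nonempty
  · exact ⟨0, by simp⟩
  obtain ⟨k, hk, hleaf⟩ := hE K hK
  obtain ⟨r, hinj, hr⟩ := ih _ (erase_ssubset hk)
  refine ⟨fun i => if i = k then 0 else r i + 1, fun i hi l hl h => ?_, fun i hi => ?_⟩
  · have := @hinj i
    grind
  · obtain rfl | hik := eq_or_ne i k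
    · refine hleaf.anti ?_
      rintro j ⟨hj, l, hl, hlt, hlj⟩
      exact ⟨hj, l, hl, by grind, hlj⟩
    · refine (hr i (mem_erase.2 ⟨hik, hi⟩)).anti ?_
      rintro j ⟨hj, l, hl, hlt, hlj⟩
      exact ⟨hj, l, by grind, by grind, hlj⟩

theorem IsEliminationRank.exists_forall_lt {E : ι → α → Prop} {r : ι → ℕ}
    (hr : IsEliminationRank E r) {X : Finset α} (hX : 1 < #X) {k : ι} (hk : ∀ j ∈ X, E k j) :
    ∃ j ∈ X, ∀ l ≠ k, E l j → r l < r k := by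
  contrapose! hX
  refine card_le_one_iff_subsingleton.2 ((hr.2 k).anti fun j hj => ⟨hk j hj, ?_⟩)
  obtain ⟨l, hl, hlj, hle⟩ := hX j hj
  exact ⟨l, hle.lt_of_ne fun h => hl (hr.1 h.symm), hlj⟩

variable [Fintype α]

open Classical in
/-- The best bundle for `k` at prices `P` under `E`: all items of positive price that `k` may
receive, and only those of the others that nobody else may receive. -/
noncomputable def bestBundle (E : ι → α → Prop) (P : α → ℝ) (k : ι) : Finset α :=
  {j | E k j ∧ (0 < P j ∨ ∀ i, E i j → i = k)}

open Classical in
theorem mem_bestBundle {E : ι → α → Prop} {P : α → ℝ} {k : ι} {j : α} :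
    j ∈ bestBundle E P k ↔ E k j ∧ (0 < P j ∨ ∀ i, E i j → i = k) :=
  mem_filter_univ _

variable [DecidableEq ι]

/-- The items that the assignment `a` gives to `i`. -/
def bundle (a : α → ι) (i : ι) : Finset α := {j | a j = i}

theorem bval_bundle (P : α → ℝ) (a : α → ι) (i : ι) :
    bval P (bundle a i) = ∑ j, if a j = i then P j else 0 :=
  sum_filter _ _

theorem bval_bundle_update [DecidableEq α] (P : α → ℝ) (a : α → ι) (j : α) (i k : ι) :
    bval P (bundle (Function.update a j i) k) = bval P (bundle a k) +
      ((if i = k then P j else 0) - if a j = k then P j else 0) := by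
  simp only [bval_bundle]
  exact sum_apply_update (fun x i => if i = k then P x else 0) a j i

theorem bval_bundle_le_bval_bestBundle {E : ι → α → Prop} (P : α → ℝ) {a : α → ι}
    (ha : ∀ j, E (a j) j) (k : ι) :
    bval P (bundle a k) ≤ bval P (bestBundle E P k) := by
  classical
  rw [bval_bundle, bval, bestBundle, sum_filter]
  refine sum_le_sum fun j _ => ?_
  have := ha j
  grind

theorem mem_symmDiff_bestBundle [DecidableEq α] {E : ι → α → Prop} {P : α → ℝ} {a : α → ι}
    (ha : ∀ j, E (a j) j) {k : ι} {j : α} (hj : j ∈ bundle a k ∆ bestBundle E P k) :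
    E k j ∧ (j ∈ bundle a k ↔ P j ≤ 0) ∧ ∃ l ≠ k, E l j := by
  have := ha j
  simp only [mem_symmDiff, bundle, mem_bestBundle, mem_filter_univ] at hj ⊢
  grind

theorem exists_forall_lt_bval_bundle_update [Finite ι] [DecidableEq α] {E : ι → α → Prop}
    {P : α → ℝ} {t : ℝ} {a₀ : α → ι} (ha₀ : ∀ j, E (a₀ j) j) (ht₀ : ∀ k, bval P (bundle a₀ k) ≤ t)
    (w : α → ι → ℤ) :
    ∃ a : α → ι, (∀ j, E (a j) j) ∧ (∀ k, bval P (bundle a k) ≤ t) ∧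
      ∀ j i, E i j → w j i < w j (a j) → ∃ k, t < bval P (bundle (Function.update a j i) k) := by
  obtain ⟨a, ⟨ha, ht⟩, hmin⟩ := Set.exists_min_image
    {a : α → ι | (∀ j, E (a j) j) ∧ ∀ k, bval P (bundle a k) ≤ t} (fun a => ∑ j, w j (a j))
    (Set.toFinite _) ⟨a₀, ha₀, ht₀⟩
  refine ⟨a, ha, ht, fun j i hij hw => ?_⟩
  by_contra! h
  have hupdate (x) : E (Function.update a j i x) x := by
    obtain rfl | hx := eq_or_ne x j
    · simpa using hij
    · simpa [hx] using ha x
  have := hmin _ ⟨hupdate, h⟩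
  rw [sum_apply_update] at this
  linarith

theorem le_bval_bundle_symmDiff_singleton [DecidableEq α] {P : α → ℝ} {t : ℝ} {a : α → ι}
    (ht : ∀ k, bval P (bundle a k) ≤ t) {i k : ι} {j : α} (hj : j ∈ bundle a k ↔ P j ≤ 0)
    (hi : i = k ↔ 0 < P j) (hmove : ∃ k', t < bval P (bundle (Function.update a j i) k')) :
    t ≤ bval P (bundle a k ∆ {j}) := by
  obtain ⟨k', hk'⟩ := hmove
  have := ht k'
  rw [bval_symmDiff_singleton hj]
  rw [bval_bundle_update] at hk'
  replace hj : a j = k ↔ P j ≤ 0 := by simpa [bundle] using hj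
  obtain hP | hP := le_or_gt (P j) 0
  · have hak := hj.2 hP
    rw [abs_of_nonpos hP]
    split_ifs at hk' <;> first | linarith | (subst_vars; linarith)
  · have hik := hi.2 hP
    rw [abs_of_pos hP]
    split_ifs at hk' <;> first | linarith | (subst_vars; linarith)

theorem IsEliminationRank.exists_rounding [Finite ι] [DecidableEq α] {E : ι → α → Prop}
    {r : ι → ℕ} (hr : IsEliminationRank E r) {P : α → ℝ} {t : ℝ} {a₀ : α → ι}
    (ha₀ : ∀ j, E (a₀ j) j) (ht₀ : ∀ k, bval P (bundle a₀ k) ≤ t) :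
    ∃ a : α → ι, (∀ j, E (a j) j) ∧ (∀ k, bval P (bundle a k) ≤ t) ∧
      ∀ k, t ≤ bval P (bestBundle E P k) → ∃ S : Finset α, #S ≤ 1 ∧
        (∀ j ∈ bundle a k ∆ S, E k j) ∧ t ≤ bval P (bundle a k ∆ S) := by
  -- The potential favours giving goods to high ranks and chores to low ranks. At most one item on
  -- which `k` falls short of its best bundle is shared with a higher rank; transferring any other
  -- one in favour of `k` lowers the potential, so it must push a bundle above `t`.
  let w (j : α) (i : ι) : ℤ := if P j ≤ 0 then r i else -r i
  obtain ⟨a, ha, ht, hmove⟩ := exists_forall_lt_bval_bundle_update ha₀ ht₀ w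
  refine ⟨a, ha, ht, fun k hk => ?_⟩
  obtain hX | hX := le_or_gt #(bundle a k ∆ bestBundle E P k) 1
  · refine ⟨_, hX, ?_, ?_⟩ <;> rw [symmDiff_symmDiff_cancel_left]
    · exact fun j hj => (mem_bestBundle.1 hj).1
    · exact hk
  obtain ⟨j, hj, hlower⟩ := hr.exists_forall_lt hX fun j hj => (mem_symmDiff_bestBundle ha hj).1
  obtain ⟨hkj, hmem, l, hl, hlj⟩ := mem_symmDiff_bestBundle ha hj
  have hak : a j = k ↔ P j ≤ 0 := by simpa [bundle] using hmem
  refine ⟨{j}, by simp, fun x hx => ?_, ?_⟩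
  · have := ha x
    simp only [mem_symmDiff, bundle, mem_filter_univ, mem_singleton] at hx
    grind
  obtain hP | hP := le_or_gt (P j) 0
  · exact le_bval_bundle_symmDiff_singleton ht hmem (by simp [hl, hP])
      (hmove j l hlj (by simpa [w, hP, hak.2 hP] using hlower l hl hlj))
  · exact le_bval_bundle_symmDiff_singleton ht hmem (by simp [hP])
      (hmove j k hkj (by simpa [w, hP.not_ge] using hlower _ (by simp [hak, hP]) (ha j)))

end Rounding

/-! ### Markets -/

section Market

open Real

variable {ι α : Type*}

/-- The value of item `j` to agent `i` after scaling the valuation of `i` by `exp (z i)`. -/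
noncomputable def bid (u : ι → α → ℝ) (z : ι → ℝ) (i : ι) (j : α) : ℝ := exp (z i) * u i j

/-- Agent `i` makes a largest bid for item `j`; ties are allowed. -/
def IsTopBid (u : ι → α → ℝ) (z : ι → ℝ) (i : ι) (j : α) : Prop :=
  ∀ k, bid u z k j ≤ bid u z i j

/-- The assignment `a` gives each item to a top bidder. -/
def IsConsistent (u : ι → α → ℝ) (z : ι → ℝ) (a : α → ι) : Prop :=
  ∀ j, IsTopBid u z (a j) j

/-- The largest bid for an item. As a supremum of reals it is meaningful only for a nonempty set of
agents whose bids are bounded above. -/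
noncomputable def price (u : ι → α → ℝ) (z : ι → ℝ) (j : α) : ℝ := ⨆ i, bid u z i j

/-- Each item is a chore for all agents, or nonnegative for all and positive for at least one. -/
def SignCoherent (u : ι → α → ℝ) : Prop :=
  ∀ j, (∀ i, u i j < 0) ∨ ((∀ i, 0 ≤ u i j) ∧ ∃ i, 0 < u i j)

/-- No agent's bundle has a larger value than that of agent `i`, each bundle being valued by the
scaled valuation of its owner. -/
def IsRichest [Fintype α] [DecidableEq ι] (u : ι → α → ℝ) (z : ι → ℝ) (a : α → ι) (i : ι) :
    Prop :=
  ∀ k, bval (bid u z k) (bundle a k) ≤ bval (bid u z i) (bundle a i)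

/-- Agent `i` likes no item and has a weight far above that of some other agent. If `B` bounds the
logarithms of the values, a gap above `2 * B` keeps `i` from being a top bidder, and an agent `i`
with a gap of `4 * B + 1` that does like an item forces its top bidders to hold no chores. -/
def IsIdle (u : ι → α → ℝ) (B : ℝ) (z : ι → ℝ) (i : ι) : Prop :=
  (∀ j, u i j ≤ 0) ∧ ∃ k, z k + (4 * B + 1) ≤ z i

/-- The weights at which `i` can lead: `i` is richest for some consistent assignment, or idle, and
its weight is within `4 * B + m + 1` of the largest, where `m` is the number of items. The term `m`
comes from bounding the value of a bundle by `m ≤ exp m` times that of an item. -/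
def leaderSet [Fintype α] [DecidableEq ι] (u : ι → α → ℝ) (B : ℝ) (i : ι) : Set (ι → ℝ) :=
  {z | (∀ k, z k ≤ z i + (4 * B + Fintype.card α + 1)) ∧
    ((∃ a, IsConsistent u z a ∧ IsRichest u z a i) ∨ IsIdle u B z i)}

variable {u : ι → α → ℝ} {z : ι → ℝ} {B : ℝ} {i k : ι} {j : α}

theorem bval_bid (u : ι → α → ℝ) (z : ι → ℝ) (i : ι) (A : Finset α) :
    bval (bid u z i) A = exp (z i) * bval (u i) A :=
  (mul_sum ..).symm

theorem IsTopBid.bid_eq_price (h : IsTopBid u z i j) : bid u z i j = price u z j :=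
  have : Nonempty ι := ⟨i⟩
  (ciSup_eq_of_forall_le_of_forall_lt_exists_gt h fun _ hw => ⟨i, hw⟩).symm

theorem bid_le_price [Finite ι] (u : ι → α → ℝ) (z : ι → ℝ) (i : ι) (j : α) :
    bid u z i j ≤ price u z j :=
  le_ciSup (Set.finite_range fun i => bid u z i j).bddAbove i

theorem bval_bid_eq_bval_price {A : Finset α} (h : ∀ j ∈ A, IsTopBid u z i j) :
    bval (bid u z i) A = bval (price u z) A :=
  sum_congr rfl fun j hj => (h j hj).bid_eq_price

theorem bval_bid_le_bval_price [Finite ι] (u : ι → α → ℝ) (z : ι → ℝ) (i : ι) (A : Finset α) :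
    bval (bid u z i) A ≤ bval (price u z) A :=
  sum_le_sum fun j _ => bid_le_price u z i j

theorem bval_le_bval_of_price_le [Finite ι] {A A' : Finset α} (hA' : ∀ j ∈ A', IsTopBid u z k j)
    (h : bval (price u z) A ≤ bval (price u z) A') :
    bval (u k) A ≤ bval (u k) A' := by
  rw [← bval_bid_eq_bval_price hA', bval_bid] at h
  have := (bval_bid_le_bval_price u z k A).trans h
  rw [bval_bid] at this
  exact le_of_mul_le_mul_left this (exp_pos _)

theorem exists_isConsistent [Finite ι] [Nonempty ι] (u : ι → α → ℝ) (z : ι → ℝ) :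
    ∃ a, IsConsistent u z a :=
  ⟨_, fun j => (Finite.exists_max fun i => bid u z i j).choose_spec⟩

theorem IsConsistent.bval_bid_bundle [Fintype α] [DecidableEq ι] {a : α → ι}
    (ha : IsConsistent u z a) (i : ι) :
    bval (bid u z i) (bundle a i) = bval (price u z) (bundle a i) :=
  bval_bid_eq_bval_price fun j hj => by
    obtain rfl : a j = i := by simpa [bundle] using hj
    exact ha j

theorem sum_bval_bid_bundle [Fintype ι] [Fintype α] [DecidableEq ι] (u : ι → α → ℝ)
    (z : ι → ℝ) (a : α → ι) : ∑ i, bval (bid u z i) (bundle a i) = ∑ j, bid u z (a j) j := by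
  simp only [bval_bundle]
  rw [sum_comm]
  simp

theorem SignCoherent.mul_exp (hu : SignCoherent u) (s : ι → α → ℝ) :
    SignCoherent fun i j => u i j * exp (s i j) := fun j => by
  simpa [mul_neg_iff, exp_pos, (exp_pos _).not_gt] using hu j

theorem IsTopBid.pos (h : IsTopBid u z i j) (hk : 0 < u k j) : 0 < u i j :=
  pos_of_mul_pos_right ((mul_pos (exp_pos _) hk).trans_le (h k)) (exp_pos _).le

theorem IsTopBid.ne_zero (h : IsTopBid u z i j) (hu : SignCoherent u) : u i j ≠ 0 := by
  obtain hneg | ⟨-, k, hk⟩ := hu j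
  · exact (hneg i).ne
  · exact (h.pos hk).ne'

theorem log_abs_bid (h : u i j ≠ 0) : log |bid u z i j| = z i + log |u i j| := by
  rw [bid, abs_mul, abs_of_pos (exp_pos _), log_mul (exp_pos _).ne' (abs_ne_zero.2 h), log_exp]

theorem IsTopBid.le_add_of_neg (h : IsTopBid u z i j) (hu : SignCoherent u)
    (hB : ∀ i j, |log (|u i j|)| ≤ B) (hi : u i j < 0) (k : ι) : z i ≤ z k + 2 * B := by
  have hneg : ∀ i, u i j < 0 := (hu j).resolve_right fun h => hi.not_ge (h.1 i)
  have bid_neg (i) : bid u z i j < 0 := mul_neg_of_pos_of_neg (exp_pos _) (hneg i)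
  have hlog : log |bid u z i j| ≤ log |bid u z k j| :=
    log_le_log (abs_pos.2 (bid_neg i).ne) <| by
      rw [abs_of_neg (bid_neg i), abs_of_neg (bid_neg k)]
      exact neg_le_neg (h k)
  rw [log_abs_bid hi.ne, log_abs_bid (hneg k).ne] at hlog
  linarith [(abs_le.1 (hB i j)).1, (abs_le.1 (hB k j)).2]

theorem IsTopBid.le_add_of_pos (h : IsTopBid u z i j) (hB : ∀ i j, |log (|u i j|)| ≤ B)
    (hk : 0 < u k j) : z k ≤ z i + 2 * B := by
  have hi := h.pos hk
  have bid_pos {i} (hi : 0 < u i j) : 0 < bid u z i j := mul_pos (exp_pos _) hi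
  have hlog : log |bid u z k j| ≤ log |bid u z i j| :=
    log_le_log (abs_pos.2 (bid_pos hk).ne') <| by
      rw [abs_of_pos (bid_pos hi), abs_of_pos (bid_pos hk)]
      exact h k
  rw [log_abs_bid hi.ne', log_abs_bid hk.ne'] at hlog
  linarith [(abs_le.1 (hB i j)).2, (abs_le.1 (hB k j)).1]

theorem IsIdle.not_isTopBid (h : IsIdle u B z i) (hu : SignCoherent u) (hB₀ : 0 ≤ B)
    (hB : ∀ i j, |log (|u i j|)| ≤ B) (j : α) : ¬ IsTopBid u z i j := by
  intro hij
  obtain ⟨hneg, k, hk⟩ := h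
  linarith [hij.le_add_of_neg hu hB ((hneg j).lt_of_ne (hij.ne_zero hu)) k]

theorem abs_le_exp_of_abs_log_le {x : ℝ} (h : |log (|x|)| ≤ B) : |x| ≤ exp B := by
  obtain rfl | hx := eq_or_ne x 0
  · simpa using (exp_pos B).le
  · exact (log_le_iff_le_exp (abs_pos.2 hx)).1 ((le_abs_self _).trans h)

theorem exp_neg_le_of_abs_log_le {x : ℝ} (hx : 0 < x) (h : |log (|x|)| ≤ B) : exp (-B) ≤ x := by
  rw [abs_of_pos hx] at h
  exact (le_log_iff_exp_le hx).1 (abs_le.1 h).1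

theorem abs_log_abs_mul_exp_le {x y : ℝ} (hx : |log (|x|)| ≤ B) (hy : |y| ≤ 1) :
    |log (|x * exp y|)| ≤ B + 1 := by
  obtain rfl | hx₀ := eq_or_ne x 0
  · simpa using (abs_nonneg _).trans (hx.trans (le_add_of_nonneg_right zero_le_one))
  · rw [abs_mul, abs_exp, log_mul (abs_ne_zero.2 hx₀) (exp_ne_zero _), log_exp]
    exact (abs_add_le _ _).trans (add_le_add hx hy)

theorem bval_bid_le_exp [Fintype α] (hB : ∀ i j, |log (|u i j|)| ≤ B) (i : ι) (A : Finset α) :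
    bval (bid u z i) A ≤ exp (Fintype.card α + z i + B) := by
  have hbid (j) : bid u z i j ≤ exp (z i + B) := by
    rw [bid, exp_add]
    gcongr
    exact (le_abs_self _).trans (abs_le_exp_of_abs_log_le (hB i j))
  calc bval (bid u z i) A ≤ #A * exp (z i + B) := by
        simpa [bval] using sum_le_card_nsmul A _ _ fun j _ => hbid j
    _ ≤ exp (Fintype.card α) * exp (z i + B) := by
        gcongr
        have := add_one_le_exp (Fintype.card α : ℝ)
        have : (#A : ℝ) ≤ Fintype.card α := mod_cast card_le_univ A
        linarith
    _ = exp (Fintype.card α + z i + B) := by rw [← exp_add, add_assoc]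

theorem exp_le_bval_bid_bundle [Fintype α] [DecidableEq ι] {a : α → ι} (ha : IsConsistent u z a)
    (hu : SignCoherent u) (hB : ∀ i j, |log (|u i j|)| ≤ B) {l : ι}
    (hij : 0 < u i j) (hl : z l + (4 * B + 1) ≤ z i) :
    exp (z i - B) ≤ bval (bid u z (a j)) (bundle a (a j)) := by
  have hgap := (ha j).le_add_of_pos hB hij
  have nonneg : ∀ x ∈ bundle a (a j), 0 ≤ bid u z (a j) x := by
    intro x hx
    replace hx : a x = a j := by simpa [bundle] using hx
    have htop : IsTopBid u z (a j) x := hx ▸ ha x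
    refine mul_nonneg (exp_pos _).le (le_of_not_gt fun hneg => ?_)
    linarith [htop.le_add_of_neg hu hB hneg l]
  calc exp (z i - B) ≤ bid u z i j := by
        rw [sub_eq_add_neg, exp_add]
        exact mul_le_mul_of_nonneg_left (exp_neg_le_of_abs_log_le hij (hB i j)) (exp_pos _).le
    _ ≤ bid u z (a j) j := ha j i
    _ ≤ bval (bid u z (a j)) (bundle a (a j)) :=
        single_le_sum nonneg (by simp [bundle])

theorem exists_mem_leaderSet [Finite ι] [Nonempty ι] [Fintype α] [DecidableEq ι]
    (hu : SignCoherent u) (hB₀ : 0 ≤ B) (hB : ∀ i j, |log (|u i j|)| ≤ B) (z : ι → ℝ) :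
    ∃ i, z ∈ leaderSet u B i := by
  obtain ⟨top, htop⟩ := Finite.exists_max z
  obtain ⟨a, ha⟩ := exists_isConsistent u z
  obtain ⟨r, hr⟩ := Finite.exists_max fun i => bval (bid u z i) (bundle a i)
  have mem_of_le (h : z top ≤ z r + (4 * B + Fintype.card α + 1)) : z ∈ leaderSet u B r :=
    ⟨fun k => (htop k).trans h, .inl ⟨a, ha, hr⟩⟩
  have : (0 : ℝ) ≤ Fintype.card α := Nat.cast_nonneg _
  by_cases hgap : ∃ k, z k + (4 * B + 1) ≤ z top
  · by_cases hpos : ∃ j, 0 < u top j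
    · obtain ⟨l, hl⟩ := hgap
      obtain ⟨j, hj⟩ := hpos
      have := exp_le_exp.1 <| (exp_le_bval_bid_bundle ha hu hB hj hl).trans <|
        (hr (a j)).trans (bval_bid_le_exp hB r _)
      exact ⟨r, mem_of_le (by linarith)⟩
    · push Not at hpos
      exact ⟨top, fun k => (htop k).trans (by linarith), .inr ⟨hpos, hgap⟩⟩
  · push Not at hgap
    exact ⟨r, mem_of_le (by linarith [hgap r])⟩

theorem isClosed_leaderSet [Finite ι] [Fintype α] [DecidableEq ι] (u : ι → α → ℝ) (B : ℝ) (i : ι) :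
    IsClosed (leaderSet u B i) := by
  have hbid (i j) : Continuous fun z => bid u z i j := by unfold bid; fun_prop
  have hbval (i A) : Continuous fun z => bval (bid u z i) A :=
    continuous_finsetSum _ fun j _ => hbid i j
  simp only [leaderSet, IsConsistent, IsTopBid, IsRichest, IsIdle, Set.ofPred_and, Set.ofPred_or,
    Set.ofPred_exists, Set.ofPred_forall]
  refine (isClosed_iInter fun k => isClosed_le (by fun_prop) (by fun_prop)).inter <|
    .union (isClosed_iUnion_of_finite fun a => ?_) ?_
  · exact (isClosed_iInter fun j => isClosed_iInter fun k =>
      isClosed_le (hbid _ _) (hbid _ _)).inter <|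
        isClosed_iInter fun k => isClosed_le (hbval _ _) (hbval _ _)
  · exact (isClosed_iInter fun j => isClosed_const).inter <|
      isClosed_iUnion_of_finite fun k => isClosed_le (by fun_prop) (by fun_prop)

end Market

section Leader

variable {n m : ℕ} [NeZero n] {u : Fin n → Fin m → ℝ} {z : Fin n → ℝ} {B : ℝ}

theorem exists_isConsistent_forall_bval_le (hB₀ : 0 ≤ B)
    (hz : ∀ i, z ∈ leaderSet u B i) :
    ∃ a t, IsConsistent u z a ∧ (∀ k, bval (price u z) (bundle a k) ≤ t) ∧
      ∀ k, ¬ IsIdle u B z k → t ≤ bval (price u z) (bestBundle (IsTopBid u z) (price u z) k) := by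
  obtain ⟨low, hlow⟩ := Finite.exists_min z
  have low_not_idle : ¬ IsIdle u B z low := fun ⟨_, k, hk⟩ => by linarith [hlow k]
  obtain ⟨s, hs, hmin⟩ := Set.exists_min_image {k | ¬ IsIdle u B z k}
    (fun k => bval (price u z) (bestBundle (IsTopBid u z) (price u z) k)) (Set.toFinite _)
    ⟨low, low_not_idle⟩
  obtain ⟨a, ha, hrich⟩ := (hz s).2.resolve_right hs
  refine ⟨a, bval (price u z) (bundle a s), ha, fun k => ?_, fun k hk => ?_⟩
  · simpa only [ha.bval_bid_bundle] using hrich k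
  · exact (bval_bundle_le_bval_bestBundle _ ha s).trans (hmin k hk)

theorem exists_isConsistent_IEF1_of_mem_leaderSet (hu : SignCoherent u) (hB₀ : 0 ≤ B)
    (hB : ∀ i j, |Real.log (|u i j|)| ≤ B) (hz : ∀ i, z ∈ leaderSet u B i) {r : Fin n → ℕ}
    (hr : IsEliminationRank (IsTopBid u z) r) :
    ∃ a, IsConsistent u z a ∧ IEF1 u (bundle a) := by
  obtain ⟨a₀, t, ha₀, ht₀, hbest⟩ := exists_isConsistent_forall_bval_le hB₀ hz
  obtain ⟨a, ha, ht, hround⟩ := hr.exists_rounding ha₀ ht₀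
  refine ⟨a, ha, fun k => ?_⟩
  by_cases hk : IsIdle u B z k
  · have hempty : bundle a k = ∅ := filter_eq_empty_iff.2 fun j _ hj =>
      hk.not_isTopBid hu hB₀ hB j (hj ▸ ha j)
    refine ⟨∅, by simp, fun l => ?_⟩
    simpa [hempty, bval] using sum_nonpos fun j (_ : j ∈ bundle a l) => hk.1 j
  · obtain ⟨S, hS, hSk, htS⟩ := hround k (hbest k hk)
    exact ⟨S, hS, fun l => bval_le_bval_of_price_le hSk ((ht l).trans htS)⟩

end Leader

/-! ### Generic valuations -/

theorem two_mul_card_image_le {β γ : Type*} [DecidableEq γ] {E : Finset β} {f : β → γ}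
    (h : ∀ e ∈ E, ∃ e' ∈ E, e' ≠ e ∧ f e' = f e) : 2 * #(E.image f) ≤ #E :=
  mul_card_image_le_card E 2 <| forall_mem_image.2 fun e he => by
    obtain ⟨e', he', hne, hf⟩ := h e he
    exact one_lt_card.2 ⟨e', by simp [he', hf], e, by simp [he], hne⟩

theorem not_linearIndepOn_sub {F M ι α : Type*} [Ring F] [StrongRankCondition F]
    [AddCommGroup M] [Module F M] {E : Finset (ι × α)} (hE : E.Nonempty)
    (hrow : ∀ e ∈ E, ∃ e' ∈ E, e' ≠ e ∧ e'.1 = e.1)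
    (hcol : ∀ e ∈ E, ∃ e' ∈ E, e' ≠ e ∧ e'.2 = e.2) (f : ι → M) (g : α → M) :
    ¬ LinearIndepOn F (fun e => g e.2 - f e.1) (E : Set (ι × α)) := by
  classical
  -- The edge vectors lie in a span of dimension less than the number of rows plus the number of
  -- columns, and each of these numbers is at most half the number of edges.
  intro hindep
  obtain ⟨e₀, he₀⟩ := hE
  let c := f e₀.1
  let W : Finset M := ((E.image Prod.fst).erase e₀.1).image (fun i => f i - c) ∪
    (E.image Prod.snd).image fun j => g j - c
  have hspan : Set.range (fun e : (E : Set (ι × α)) => g e.1.2 - f e.1.1) ⊆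
      Submodule.span F (W : Set M) := by
    rintro _ ⟨⟨e, he⟩, rfl⟩
    have hg : g e.2 - c ∈ Submodule.span F (W : Set M) := Submodule.subset_span <|
      mem_union_right _ (mem_image_of_mem _ (mem_image_of_mem _ he))
    have hf : f e.1 - c ∈ Submodule.span F (W : Set M) := by
      obtain heq | hne := eq_or_ne e.1 e₀.1
      · simp [heq, c]
      · exact Submodule.subset_span <| mem_union_left _ <| mem_image_of_mem _ <|
          mem_erase.2 ⟨hne, mem_image_of_mem _ he⟩
    simpa using Submodule.sub_mem _ hg hf
  have hcard : #E ≤ #W := by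
    simpa using linearIndependent_le_span' _ hindep.linearIndependent (W : Set M) hspan
  have hWcard : #W ≤ #((E.image Prod.fst).erase e₀.1) + #(E.image Prod.snd) :=
    (card_union_le _ _).trans (Nat.add_le_add card_image_le card_image_le)
  have := card_erase_lt_of_mem (mem_image_of_mem Prod.fst he₀)
  have := two_mul_card_image_le hrow
  have := two_mul_card_image_le hcol
  omega

theorem exists_linearIndependent_near {κ : Type*} [Finite κ] (L : κ → ℝ) {δ : ℝ} (hδ : 0 < δ) :
    ∃ L' : κ → ℝ, (∀ e, |L' e - L e| < δ) ∧ LinearIndependent ℚ L' := by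
  classical
  have := Fintype.ofFinite κ
  suffices h : ∀ s : Finset κ, ∃ L' : κ → ℝ, (∀ e, |L' e - L e| < δ) ∧
      LinearIndepOn ℚ L' (s : Set κ) by
    simpa [linearIndepOn_univ_iff] using h univ
  intro s
  induction s using Finset.induction with
  | empty => exact ⟨L, fun _ => by simpa using hδ, by simp⟩
  | insert e s he ih =>
    obtain ⟨L', hL', hindep⟩ := ih
    have hcountable : (Submodule.span ℚ (L' '' s) : Set ℝ).Countable := by
      rw [Set.image_eq_range]
      exact Set.countable_coe_iff.1 (inferInstanceAs (Countable (Submodule.span ℚ (Set.range _))))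
    obtain ⟨x, hx, hxL⟩ := (hcountable.dense_compl ℝ).exists_dist_lt (L e) hδ
    have heq : Set.EqOn L' (Function.update L' e x) s := fun e' he' =>
      (Function.update_of_ne (ne_of_mem_of_not_mem he' he) _ _).symm
    refine ⟨Function.update L' e x, fun e' => ?_, ?_⟩
    · obtain rfl | hne := eq_or_ne e' e
      · simpa [Real.dist_eq, abs_sub_comm] using hxL
      · simpa [hne] using hL' e'
    · rw [coe_insert]
      refine (hindep.congr heq).insert ?_
      rwa [Function.update_self, ← heq.image_eq]

section Generic

variable {ι α : Type*}

/-- The logarithms of the absolute values of the nonzero entries of `u` are linearly independent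
over the rationals. -/
def LogIndependent (u : ι → α → ℝ) : Prop :=
  LinearIndepOn ℚ (fun e : ι × α => Real.log |u e.1 e.2|) {e | u e.1 e.2 ≠ 0}

theorem IsTopBid.log_abs_eq {u : ι → α → ℝ} {z : ι → ℝ} {i : ι} {j : α} (h : IsTopBid u z i j)
    (hu : SignCoherent u) : Real.log |u i j| = Real.log |price u z j| - z i := by
  rw [← h.bid_eq_price, log_abs_bid (h.ne_zero hu)]
  ring

theorem LogIndependent.exists_isEliminationRank [Finite ι] [Finite α] {u : ι → α → ℝ}
    (hlog : LogIndependent u) (hu : SignCoherent u) (z : ι → ℝ) :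
    ∃ r, IsEliminationRank (IsTopBid u z) r := by
  classical
  have := Fintype.ofFinite ι
  have := Fintype.ofFinite α
  refine exists_isEliminationRank_of_leaf fun K hK => ?_
  by_contra! hcycle
  let E : Finset (ι × α) :=
    {e | e.1 ∈ K ∧ IsTopBid u z e.1 e.2 ∧ ∃ l ∈ K, l ≠ e.1 ∧ IsTopBid u z l e.2}
  have hmem {k : ι} {j : α} :
      (k, j) ∈ E ↔ k ∈ K ∧ IsTopBid u z k j ∧ ∃ l ∈ K, l ≠ k ∧ IsTopBid u z l j :=
    mem_filter_univ _
  have hrow : ∀ e ∈ E, ∃ e' ∈ E, e' ≠ e ∧ e'.1 = e.1 := by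
    rintro ⟨k, j⟩ he
    obtain ⟨j', hj', hne⟩ := (hcycle k (hmem.1 he).1).exists_ne j
    exact ⟨(k, j'), hmem.2 ⟨(hmem.1 he).1, hj'⟩, by simpa using hne, rfl⟩
  have hcol : ∀ e ∈ E, ∃ e' ∈ E, e' ≠ e ∧ e'.2 = e.2 := by
    rintro ⟨k, j⟩ he
    obtain ⟨hk, hkj, l, hl, hlk, hlj⟩ := hmem.1 he
    exact ⟨(l, j), hmem.2 ⟨hl, hlj, k, hk, hlk.symm, hkj⟩, by simpa using hlk, rfl⟩
  obtain ⟨k, hk⟩ := hK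
  obtain ⟨j, hj⟩ := (hcycle k hk).nonempty
  refine not_linearIndepOn_sub ⟨(k, j), hmem.2 ⟨hk, hj⟩⟩ hrow hcol z
    (fun j => Real.log |price u z j|) ((hlog.mono fun e he => ?_).congr fun e he => ?_)
  · exact (hmem.1 he).2.1.ne_zero hu
  · exact (hmem.1 he).2.1.log_abs_eq hu

theorem dense_setOf_logIndependent_mul_exp [Finite ι] [Finite α] (v : ι → α → ℝ) :
    Dense {s : ι → α → ℝ | LogIndependent fun i j => v i j * Real.exp (s i j)} := by
  have := Fintype.ofFinite ι
  have := Fintype.ofFinite α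
  refine Metric.dense_iff.2 fun s₀ δ hδ => ?_
  obtain ⟨L, hL, hindep⟩ := exists_linearIndependent_near
    (fun e : ι × α => Real.log |v e.1 e.2| + s₀ e.1 e.2) hδ
  refine ⟨fun i j => L (i, j) - Real.log |v i j|, ?_, ?_⟩
  · refine (dist_pi_lt_iff hδ).2 fun i => (dist_pi_lt_iff hδ).2 fun j => ?_
    rw [Real.dist_eq, sub_sub]
    exact hL (i, j)
  · change LogIndependent fun i j => v i j * Real.exp (L (i, j) - Real.log |v i j|)
    refine (hindep.linearIndepOn _).congr fun e he => ?_
    have hne : v e.1 e.2 ≠ 0 := left_ne_zero_of_mul he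
    simp only [abs_mul, Real.abs_exp]
    rw [Real.log_mul (abs_ne_zero.2 hne) (Real.exp_ne_zero _), Real.log_exp, add_sub_cancel]

end Generic

/-! ### Passing to the limit -/

section Existence

variable {n m : ℕ} {u v : Fin n → Fin m → ℝ}

theorem isAlloc_bundle (a : Fin m → Fin n) : IsAlloc (bundle a) := fun j =>
  ⟨a j, by simp [bundle], fun i hi => by simpa [bundle, eq_comm] using hi⟩

theorem IsAlloc.exists_eq_bundle {A : Fin n → Finset (Fin m)} (hA : IsAlloc A) :
    ∃ a, A = bundle a := by
  choose a ha ha' using hA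
  refine ⟨a, funext fun i => ext fun j => ?_⟩
  simp only [bundle, mem_filter_univ]
  exact ⟨fun h => (ha' j i h).symm, fun h => h ▸ ha j⟩

theorem IsConsistent.paretoOptimal {z : Fin n → ℝ} {a : Fin m → Fin n} (ha : IsConsistent u z a) :
    ParetoOptimal u (bundle a) := by
  rintro ⟨A, hA, hle, i, hlt⟩
  obtain ⟨b, rfl⟩ := hA.exists_eq_bundle
  have hlt_sum : ∑ i, bval (bid u z i) (bundle a i) < ∑ i, bval (bid u z i) (bundle b i) := by
    simp only [bval_bid]
    exact sum_lt_sum (fun k _ => mul_le_mul_of_nonneg_left (hle k) (Real.exp_pos _).le)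
      ⟨i, mem_univ i, mul_lt_mul_of_pos_left hlt (Real.exp_pos _)⟩
  rw [sum_bval_bid_bundle, sum_bval_bid_bundle] at hlt_sum
  exact hlt_sum.not_ge (sum_le_sum fun j _ => ha j (b j))

theorem isClosed_setOf_IEF1 (A : Fin n → Finset (Fin m)) :
    IsClosed {u : Fin n → Fin m → ℝ | IEF1 u A} := by
  have hbval (i S) : Continuous fun u : Fin n → Fin m → ℝ => bval (u i) S := by
    unfold bval; fun_prop
  simp only [IEF1, Set.ofPred_forall, Set.ofPred_exists, Set.ofPred_and]
  exact isClosed_iInter fun i => isClosed_iUnion_of_finite fun S =>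
    isClosed_const.inter (isClosed_iInter fun j => isClosed_le (hbval _ _) (hbval _ _))

theorem isClosed_setOf_exists_isConsistent_IEF1 (n m : ℕ) (ρ : ℝ) :
    IsClosed {u : Fin n → Fin m → ℝ | ∃ z ∈ Metric.closedBall (0 : Fin n → ℝ) ρ,
      ∃ a, IsConsistent u z a ∧ IEF1 u (bundle a)} := by
  have hclosed : IsClosed {p : (Fin n → Fin m → ℝ) × Metric.closedBall (0 : Fin n → ℝ) ρ |
      ∃ a, IsConsistent p.1 p.2 a ∧ IEF1 p.1 (bundle a)} := by
    have hbid (i j) : Continuous fun p : (Fin n → Fin m → ℝ) ×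
        Metric.closedBall (0 : Fin n → ℝ) ρ => bid p.1 p.2 i j :=
      (Real.continuous_exp.comp
        ((continuous_apply i).comp (continuous_subtype_val.comp continuous_snd))).mul
      (by fun_prop)
    simp only [IsConsistent, IsTopBid, Set.ofPred_exists, Set.ofPred_and, Set.ofPred_forall]
    exact isClosed_iUnion_of_finite fun a =>
      (isClosed_iInter fun j => isClosed_iInter fun k =>
        isClosed_le (hbid _ _) (hbid _ _)).inter
      ((isClosed_setOf_IEF1 _).preimage continuous_fst)
  have : CompactSpace (Metric.closedBall (0 : Fin n → ℝ) ρ) :=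
    isCompact_iff_compactSpace.1 (isCompact_closedBall _ _)
  convert isClosedMap_fst_of_compactSpace _ hclosed using 1
  ext u
  simp

variable [NeZero n] {B : ℝ}

theorem LogIndependent.exists_isConsistent_IEF1 (hlog : LogIndependent u) (hu : SignCoherent u)
    (hB₀ : 0 ≤ B) (hB : ∀ i j, |Real.log (|u i j|)| ≤ B) :
    ∃ z ∈ Metric.closedBall (0 : Fin n → ℝ) (4 * B + m + 1),
      ∃ a, IsConsistent u z a ∧ IEF1 u (bundle a) := by
  obtain ⟨z, hsum, hz⟩ := exists_sum_eq_zero_forall_mem (R := 4 * B + m + 1)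
    (isClosed_leaderSet u B) (exists_mem_leaderSet hu hB₀ hB) fun i z hz => by simpa using hz.1
  obtain ⟨r, hr⟩ := hlog.exists_isEliminationRank hu z
  refine ⟨z, mem_closedBall_zero_iff.2 (norm_le_of_sum_eq_zero hsum fun i j => ?_),
    exists_isConsistent_IEF1_of_mem_leaderSet hu hB₀ hB hz hr⟩
  simpa using (hz i).1 j

theorem SignCoherent.exists_isConsistent_IEF1 (hv : SignCoherent v) :
    ∃ z a, IsConsistent v z a ∧ IEF1 v (bundle a) := by
  obtain ⟨B, hB⟩ := (Set.finite_range fun e : Fin n × Fin m => |Real.log (|v e.1 e.2|)|).bddAbove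
  replace hB (i j) : |Real.log (|v i j|)| ≤ max B 0 := le_max_of_le_left (hB ⟨(i, j), rfl⟩)
  let perturb (s : Fin n → Fin m → ℝ) (i : Fin n) (j : Fin m) : ℝ := v i j * Real.exp (s i j)
  have hperturb : Continuous perturb := by unfold perturb; fun_prop
  have hclosed := (isClosed_setOf_exists_isConsistent_IEF1 n m
    (4 * (max B 0 + 1) + m + 1)).preimage hperturb
  have zero_mem : (0 : Fin n → Fin m → ℝ) ∈ closure (Metric.ball 0 1 ∩
      {s | LogIndependent (perturb s)}) :=
    (dense_setOf_logIndependent_mul_exp v).open_subset_closure_inter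
      Metric.isOpen_ball (Metric.mem_ball_self one_pos)
  obtain ⟨z, -, a, ha, hIEF1⟩ := closure_minimal (fun s hs => by
    have hs_le (i j) : |s i j| ≤ 1 := (norm_le_pi_norm (s i) j).trans <|
      (norm_le_pi_norm s i).trans (mem_ball_zero_iff.1 hs.1).le
    exact LogIndependent.exists_isConsistent_IEF1 hs.2 (hv.mul_exp s) (by positivity)
      fun i j => abs_log_abs_mul_exp_le (hB i j) (hs_le i j)) hclosed zero_mem
  simp only [perturb, Pi.zero_apply, Real.exp_zero, mul_one] at ha hIEF1
  exact ⟨z, a, ha, hIEF1⟩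

end Existence

/-- any mixed-manna instance (each item a good, a chore, or a
nonnegatively-valued item) admits an IEF1 and PO allocation. -/
theorem stmt0 (n m : ℕ) (hn : 0 < n) (v : Fin n → Fin m → ℝ)
    (htypes : ∀ j : Fin m,
      (∀ i, 0 < v i j) ∨ (∀ i, v i j < 0) ∨
      ((∀ i, 0 ≤ v i j) ∧ (∃ a, 0 < v a j) ∧ (∃ b, v b j = 0))) :
    ∃ A : Fin n → Finset (Fin m), IsAlloc A ∧ IEF1 v A ∧ ParetoOptimal v A := by
  have : NeZero n := ⟨hn.ne'⟩
  have hv : SignCoherent v := by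
    intro j
    obtain hgood | hchore | ⟨hnonneg, hpos, -⟩ := htypes j
    · exact .inr ⟨fun i => (hgood i).le, ⟨0, hgood 0⟩⟩
    · exact .inl hchore
    · exact .inr ⟨hnonneg, hpos⟩
  obtain ⟨z, a, ha, hIEF1⟩ := hv.exists_isConsistent_IEF1
  exact ⟨bundle a, isAlloc_bundle a, hIEF1, ha.paretoOptimal⟩
end

section
/- (Knaster–Kuratowski–Mazurkiewicz, support version) Let C_1, C_2, …, C_n ⊆ Δ_{n−1} be closed subsets of the (n−1)-dimensional standard simplex such that for every w ∈ Δ_{n−1} there exists an index i ∈ Supp(w) = {k : w_k > 0} with w ∈ C_i. Then the intersection ∩_{i=1}^n C_i is nonempty. -/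
/-!
Call a set dominant if no point beats, in every one of finitely many linear orders, the minimum of
that order over the set. A dominant set with one element fewer than there are orders extends to a
dominant set by one more point in exactly two ways, except for a set of slack points, which extends
in only one. A Sperner parity count therefore gives a dominant set containing every color
(Scarf's lemma).

Order the points of the simplex by their coordinates, and color each point by an index `i` of a
member of a closed cover `A` containing it. Scarf's lemma for finite sets of points and compactness
give points `z i` and a nonempty set `J` of indices `i` with `z i ∈ A i` such that no point of the
simplex has all its `J`-coordinates above the minima of those coordinates over `z`. These minima
must then sum to at least `1` over `J`, so all the `z i` are the same point, which is supported on
`J` and lies in `A i` for all `i ∈ J`.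

Apply this to the sets `A i` of points whose largest distance to the closed sets is the distance to
`C i`. The point `w` obtained lies in some `C i` with `w i > 0`, so its largest distance is `0`.
-/

section Sperner

open Finset

open Classical in
theorem card_filter_bijOn_erase_eq_two {β γ : Type*} [DecidableEq β] [DecidableEq γ]
    {f : β → γ} {s : Finset β} {t : Finset γ}
    (himage : s.image f = t) (hcard : #s = #t + 1) :
    #{p ∈ s | Set.BijOn f (s.erase p) t} = 2 := by
  have hmaps : Set.MapsTo f s t := fun x hx => himage ▸ mem_image_of_mem f hx
  obtain ⟨a, ha, b, hb, hab, hfab⟩ :=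
    exists_ne_map_eq_of_card_lt_of_maps_to (by omega : #t < #s) hmaps
  have bijOn_erase : ∀ {p q}, p ∈ s → q ∈ s → p ≠ q → f p = f q →
      Set.BijOn f (s.erase p) t := by
    intro p q hp hq hpq hfpq
    have hmaps' : Set.MapsTo f (s.erase p) t := hmaps.mono_left (coe_subset.2 (erase_subset p s))
    have hsurj : Set.SurjOn f (s.erase p) t := by
      intro y hy
      obtain ⟨x, hx, rfl⟩ := mem_image.1 (himage ▸ mem_coe.1 hy)
      rcases eq_or_ne x p with rfl | hxp
      · exact ⟨q, mem_erase.2 ⟨hpq.symm, hq⟩, hfpq.symm⟩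
      · exact ⟨x, mem_erase.2 ⟨hxp, hx⟩, rfl⟩
    refine ⟨hmaps', injOn_of_surjOn_of_card_le f hmaps' hsurj ?_, hsurj⟩
    rw [card_erase_of_mem hp]
    omega
  suffices h : {p ∈ s | Set.BijOn f (s.erase p) t} = ({a, b} : Finset β) by
    rw [h, card_pair hab]
  ext p
  simp only [mem_filter, mem_insert, mem_singleton]
  constructor
  · rintro ⟨-, hp⟩
    by_contra! hne
    exact hab (hp.injOn (mem_erase.2 ⟨hne.1.symm, ha⟩) (mem_erase.2 ⟨hne.2.symm, hb⟩) hfab)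
  · rintro (rfl | rfl)
    · exact ⟨ha, bijOn_erase ha hb hab hfab⟩
    · exact ⟨hb, bijOn_erase hb ha hab.symm hfab.symm⟩

theorem sum_card_insert_mem_eq_sum_card_erase_mem {Y : Type*} [Fintype Y] [DecidableEq Y]
    (𝒟 ℛ : Finset (Finset Y)) :
    ∑ τ ∈ 𝒟, #{y | y ∉ τ ∧ insert y τ ∈ ℛ} = ∑ σ ∈ ℛ, #{x ∈ σ | σ.erase x ∈ 𝒟} := by
  rw [← card_sigma, ← card_sigma]
  refine card_nbij' (fun p => ⟨insert p.2 p.1, p.2⟩) (fun p => ⟨p.1.erase p.2, p.2⟩) ?_ ?_ ?_ ?_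
  · rintro ⟨τ, y⟩ h
    simp_all
  · rintro ⟨σ, x⟩ h
    simp_all
  · rintro ⟨τ, y⟩ h
    simp_all
  · rintro ⟨σ, x⟩ h
    simp_all

variable {ι Y : Type*} [Fintype ι] [DecidableEq ι] [DecidableEq Y]

open Classical in
theorem even_card_filter_bijOn_erase {c : Y → ι} {σ : Finset Y} (i₀ : ι)
    (hcard : #σ = Fintype.card ι) (hσ : σ.image c ≠ univ) :
    Even #{x ∈ σ | Set.BijOn c (σ.erase x) (univ.erase i₀ : Finset ι)} := by
  rcases eq_empty_or_nonempty {x ∈ σ | Set.BijOn c (σ.erase x) (univ.erase i₀ : Finset ι)}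
    with h | ⟨x, hx⟩
  · rw [h, card_empty]
    exact Even.zero
  obtain ⟨-, hbij⟩ := mem_filter.1 hx
  have hsub : univ.erase i₀ ⊆ σ.image c := by
    intro i hi
    obtain ⟨y, hy, rfl⟩ := hbij.surjOn hi
    exact mem_image_of_mem c (mem_of_mem_erase hy)
  have himage : σ.image c = univ.erase i₀ := by
    refine (eq_of_subset_of_card_le hsub ?_).symm
    have := card_lt_card (ssubset_univ_iff.2 hσ)
    rw [card_univ] at this
    rw [card_erase_of_mem (mem_univ i₀), card_univ]
    omega
  rw [card_filter_bijOn_erase_eq_two himage]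
  · exact even_two
  · rw [hcard, card_erase_add_one (mem_univ i₀), card_univ]

open Classical in
theorem exists_image_eq_univ_of_odd_sum [Fintype Y] {ℛ : Finset (Finset Y)} {c : Y → ι} {i₀ : ι}
    (hcard : ∀ σ ∈ ℛ, #σ = Fintype.card ι)
    (hodd : Odd (∑ τ ∈ ({τ | Set.BijOn c τ (univ.erase i₀ : Finset ι)} : Finset (Finset Y)),
      #{y | y ∉ τ ∧ insert y τ ∈ ℛ})) :
    ∃ σ ∈ ℛ, σ.image c = univ := by
  by_contra! h
  refine Nat.not_even_iff_odd.2 hodd ?_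
  rw [sum_card_insert_mem_eq_sum_card_erase_mem]
  refine even_sum _ fun σ hσ => ?_
  simp only [mem_filter_univ]
  exact even_card_filter_bijOn_erase i₀ (hcard σ hσ) (h σ hσ)

end Sperner

section Scarf

variable {ι Y α : Type*} [LinearOrder α] {r : ι → Y → α}

/-- Scarf's dominating sets: no point `y` strictly exceeds, in every ranking at once, the minimum
of that ranking over `σ`. -/
def IsDominant (r : ι → Y → α) (σ : Finset Y) : Prop :=
  ∀ y, ∃ i, ∀ s ∈ σ, r i y ≤ r i s

/-- The slack points of Scarf's lemma, one for each ranking: `e i` is the bottom of ranking `i`,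
and exceeds every non-slack point in each of the other rankings. -/
structure IsSlack (r : ι → Y → α) (e : ι → Y) : Prop where
  le (i : ι) (y : Y) : r i (e i) ≤ r i y
  lt {i j : ι} {x : Y} (hij : j ≠ i) (hx : x ∉ Set.range e) : r i x < r i (e j)

/-- `m i` minimizes the `i`-th ranking over `τ`. These minimizers control which points can be added
to `τ` while preserving dominance. -/
structure IsMinimizer (r : ι → Y → α) (τ : Finset Y) (m : ι → Y) : Prop where
  mem (i : ι) : m i ∈ τ
  le (i : ι) {t : Y} (ht : t ∈ τ) : r i (m i) ≤ r i t

/-- The points lying strictly above the minimizers `m` in every ranking other than `p`. The best of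
them in ranking `p` is the one that can be added to a dominant set with minimizers `m`. -/
def aboveExcept (r : ι → Y → α) (m : ι → Y) (p : ι) : Set Y :=
  {x | ∀ i ≠ p, r i (m i) < r i x}

open Finset

theorem IsDominant.mono {σ τ : Finset Y} (hσ : IsDominant r σ) (h : τ ⊆ σ) : IsDominant r τ :=
  fun y => (hσ y).imp fun _ hi s hs => hi s (h hs)

variable {τ : Finset Y} {m : ι → Y}

theorem IsDominant.exists_eq_minimizer (hr : ∀ i, Function.Injective (r i))
    (hτ : IsDominant r τ) (hm : IsMinimizer r τ m) {t : Y} (ht : t ∈ τ) : ∃ i, m i = t := by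
  obtain ⟨i, hi⟩ := hτ t
  exact ⟨i, hr i (le_antisymm (hm.le i ht) (hi _ (hm.mem i)))⟩

theorem IsDominant.insert_of_isMaxOn [DecidableEq Y] (hτ : IsDominant r τ) (hm : IsMinimizer r τ m)
    {p : ι} {y : Y} (hy : y ∈ aboveExcept r m p)
    (hmax : IsMaxOn (r p) (aboveExcept r m p) y) : IsDominant r (insert y τ) := by
  intro x
  by_cases hx : x ∈ aboveExcept r m p
  · obtain ⟨i, hi⟩ := hτ x
    obtain rfl : i = p := by
      by_contra hip
      exact (hx i hip).not_ge (hi _ (hm.mem i))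
    exact ⟨i, forall_mem_insert _ _ _ |>.2 ⟨hmax hx, hi⟩⟩
  · obtain ⟨i, hip, hi⟩ : ∃ i ≠ p, r i x ≤ r i (m i) := by
      simpa [aboveExcept] using hx
    exact ⟨i, forall_mem_insert _ _ _ |>.2
      ⟨hi.trans (hy i hip).le, fun t ht => hi.trans (hm.le i ht)⟩⟩

theorem IsDominant.eq_of_mem_aboveExcept (hτ : IsDominant r τ) (hm : IsMinimizer r τ m)
    {p q : ι} {y : Y} (hp : y ∈ aboveExcept r m p) (hq : y ∈ aboveExcept r m q) : p = q := by
  obtain ⟨i, hi⟩ := hτ y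
  by_contra hpq
  rcases ne_or_eq i p with hip | rfl
  · exact (hp i hip).not_ge (hi _ (hm.mem i))
  · exact (hq i hpq).not_ge (hi _ (hm.mem i))

variable [Fintype ι]

theorem notMem_of_mem_aboveExcept [DecidableEq ι] {p : ι} {y : Y}
    (hbij : Set.BijOn m (univ.erase p : Finset ι) τ) (hy : y ∈ aboveExcept r m p) : y ∉ τ := by
  intro hyτ
  obtain ⟨i, hi, rfl⟩ := hbij.surjOn hyτ
  exact (hy i (ne_of_mem_erase hi)).false

variable [DecidableEq Y]

theorem IsDominant.exists_isMaxOn_of_insert [DecidableEq ι] (hr : ∀ i, Function.Injective (r i))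
    (hm : IsMinimizer r τ m) (hcard : #τ + 1 = Fintype.card ι) {y : Y} (hy : y ∉ τ)
    (hσ : IsDominant r (insert y τ)) :
    ∃ p, Set.BijOn m (univ.erase p : Finset ι) τ ∧ y ∈ aboveExcept r m p ∧
      IsMaxOn (r p) (aboveExcept r m p) y := by
  obtain ⟨p, hp⟩ := hσ y
  have hlt : ∀ t ∈ τ, ∃ i, m i = t ∧ r i (m i) < r i y := by
    intro t ht
    obtain ⟨i, hi⟩ := hσ t
    obtain rfl : m i = t := hr i (le_antisymm (hm.le i ht) (hi _ (mem_insert_of_mem (hm.mem i))))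
    exact ⟨i, rfl, (hi y (mem_insert_self y τ)).lt_of_ne fun h => hy (hr i h ▸ ht)⟩
  have hmaps : Set.MapsTo m (univ.erase p : Finset ι) τ := fun i _ => hm.mem i
  have hsurj : Set.SurjOn m (univ.erase p : Finset ι) τ := by
    intro t ht
    obtain ⟨i, rfl, hi⟩ := hlt t ht
    refine ⟨i, mem_erase.2 ⟨?_, mem_univ i⟩, rfl⟩
    rintro rfl
    exact hi.not_ge (hp _ (mem_insert_of_mem ht))
  have hinj : Set.InjOn m (univ.erase p : Finset ι) := by
    refine injOn_of_surjOn_of_card_le m hmaps hsurj ?_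
    rw [card_erase_of_mem (mem_univ p), card_univ]
    omega
  have habove : y ∈ aboveExcept r m p := by
    intro i hip
    obtain ⟨j, hji, hj⟩ := hlt (m i) (hm.mem i)
    have hjp : j ≠ p := by
      rintro rfl
      exact hj.not_ge (hp _ (mem_insert_of_mem (hm.mem j)))
    obtain rfl : j = i := hinj (by simpa using hjp) (by simpa using hip) hji
    exact hj
  refine ⟨p, ⟨hmaps, hinj, hsurj⟩, habove, fun x hx => ?_⟩
  obtain ⟨i, hi⟩ := hσ x
  obtain rfl : i = p := by
    by_contra hip
    exact (hx i hip).not_ge (hi _ (mem_insert_of_mem (hm.mem i)))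
  exact hi y (mem_insert_self y τ)

variable {e : ι → Y}

theorem IsSlack.isDominant_insert_iff [DecidableEq ι] (he : IsSlack r e)
    (hr : ∀ i, Function.Injective (r i)) {i₀ : ι} {x : Y} (hx : x ∉ Set.range e)
    (hmax : IsMaxOn (r i₀) (Set.range e)ᶜ x) {y : Y} (hy : y ∉ (univ.erase i₀).image e) :
    IsDominant r (insert y ((univ.erase i₀).image e)) ↔ y = x := by
  constructor
  · intro hσ
    obtain ⟨i, hi⟩ := hσ x
    have eq_of_mem : ∀ {j}, e j ∈ insert y ((univ.erase i₀).image e) → j ≠ i := by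
      rintro j hj rfl
      exact hx ⟨j, hr j (le_antisymm (he.le j x) (hi _ hj))⟩
    obtain rfl : i = i₀ := by
      by_contra hne
      exact eq_of_mem (mem_insert_of_mem (mem_image_of_mem e (by simpa using hne))) rfl
    have hyrange : y ∉ Set.range e := by
      rintro ⟨j, rfl⟩
      exact hy (mem_image_of_mem e (by simpa using eq_of_mem (mem_insert_self _ _)))
    exact hr i (le_antisymm (hmax hyrange) (hi y (mem_insert_self _ _)))
  · rintro rfl z
    by_cases hz : z ∈ Set.range e
    · obtain ⟨k, rfl⟩ := hz
      exact ⟨k, fun s _ => he.le k s⟩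
    · refine ⟨i₀, forall_mem_insert _ _ _ |>.2 ⟨hmax hz, forall_mem_image.2 fun j hj => ?_⟩⟩
      exact (he.lt (ne_of_mem_erase hj) hz).le

variable [Fintype Y]

open Classical in
theorem IsDominant.card_filter_insert_eq_two (hr : ∀ i, Function.Injective (r i))
    (hτ : IsDominant r τ) (hm : IsMinimizer r τ m)
    (hcard : #τ + 1 = Fintype.card ι) (hne : ∀ p, (aboveExcept r m p).Nonempty) :
    #{y | y ∉ τ ∧ IsDominant r (insert y τ)} = 2 := by
  have himage : univ.image m = τ := by
    ext t
    simpa using ⟨fun ⟨i, hi⟩ => hi ▸ hm.mem i, hτ.exists_eq_minimizer hr hm⟩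
  rw [← card_filter_bijOn_erase_eq_two himage (by rw [card_univ, hcard])]
  choose y hy hmax using fun p =>
    Set.exists_max_image (aboveExcept r m p) (r p) (Set.toFinite _) (hne p)
  symm
  refine card_bij (fun p _ => y p) ?_ ?_ ?_
  · intro p hp
    rw [mem_filter_univ]
    exact ⟨notMem_of_mem_aboveExcept (mem_filter.1 hp).2 (hy p),
      hτ.insert_of_isMaxOn hm (hy p) (hmax p)⟩
  · intro p _ q _ hpq
    exact hτ.eq_of_mem_aboveExcept hm (hy p) (hpq ▸ hy q)
  · intro x hx
    obtain ⟨hxτ, hσ⟩ := (mem_filter_univ x).1 hx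
    obtain ⟨p, hbij, hx, hxmax⟩ := hσ.exists_isMaxOn_of_insert hr hm hcard hxτ
    exact ⟨p, by simpa using hbij, hr p (le_antisymm (hxmax (hy p)) (hmax p x hx))⟩

open Classical in
theorem IsSlack.card_filter_insert_eq_two (he : IsSlack r e) (hr : ∀ i, Function.Injective (r i))
    (hτ : IsDominant r τ) (hcard : #τ + 1 = Fintype.card ι) {x : Y} (hxτ : x ∈ τ)
    (hx : x ∉ Set.range e) :
    #{y | y ∉ τ ∧ IsDominant r (insert y τ)} = 2 := by
  choose m hmem hmin using fun i => exists_min_image τ (r i) ⟨x, hxτ⟩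
  exact hτ.card_filter_insert_eq_two hr ⟨hmem, hmin⟩ hcard
    fun p => ⟨e p, fun i hip => (hmin i x hxτ).trans_lt (he.lt hip.symm hx)⟩

variable [DecidableEq ι]

open Classical in
theorem IsSlack.card_filter_insert_image_eq_one (he : IsSlack r e)
    (hr : ∀ i, Function.Injective (r i)) (hne : ∃ x, x ∉ Set.range e) (i₀ : ι) :
    #{y | y ∉ (univ.erase i₀).image e ∧ IsDominant r (insert y ((univ.erase i₀).image e))} = 1 := by
  obtain ⟨x, hx, hmax⟩ := Set.exists_max_image (Set.range e)ᶜ (r i₀) (Set.toFinite _) hne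
  refine card_eq_one.2 ⟨x, ?_⟩
  ext y
  rw [mem_filter_univ, mem_singleton]
  constructor
  · rintro ⟨hy, hσ⟩
    exact (he.isDominant_insert_iff hr hx hmax hy).1 hσ
  · rintro rfl
    have hy : y ∉ (univ.erase i₀).image e := fun h =>
      hx (Set.mem_range.2 ((mem_image.1 h).imp fun _ hj => hj.2))
    exact ⟨hy, (he.isDominant_insert_iff hr hx hmax hy).2 rfl⟩

open Classical in
theorem IsSlack.even_card_filter_insert (he : IsSlack r e) (hr : ∀ i, Function.Injective (r i))
    {c : Y → ι} (hc : Function.LeftInverse c e) {i₀ : ι}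
    (hbij : Set.BijOn c τ (univ.erase i₀ : Finset ι)) (hτ : τ ≠ (univ.erase i₀).image e) :
    Even #{y | y ∉ τ ∧ IsDominant r (insert y τ)} := by
  have hcard : #τ + 1 = Fintype.card ι := by
    rw [hbij.finsetCard_eq, card_erase_add_one (mem_univ i₀), card_univ]
  by_cases hdom : IsDominant r τ
  · obtain ⟨x, hxτ, hx⟩ : ∃ x ∈ τ, x ∉ Set.range e := by
      by_contra! hrange
      refine hτ (eq_of_subset_of_card_le (fun t ht => ?_) ?_)
      · obtain ⟨j, rfl⟩ := hrange t ht
        exact mem_image_of_mem e (by simpa [hc j] using hbij.mapsTo ht)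
      · exact card_image_le.trans hbij.finsetCard_eq.ge
    rw [he.card_filter_insert_eq_two hr hdom hcard hxτ hx]
    exact even_two
  · have hempty : ∀ y, ¬ (y ∉ τ ∧ IsDominant r (insert y τ)) := fun y hy =>
      hdom (hy.2.mono (subset_insert y τ))
    simp [hempty]

theorem IsSlack.exists_isDominant_surjOn {ι Y : Type*} [Finite ι] [Finite Y] [Nonempty ι]
    {r : ι → Y → α} {e : ι → Y} (he : IsSlack r e)
    (hr : ∀ i, Function.Injective (r i)) (hne : ∃ x, x ∉ Set.range e) {c : Y → ι}
    (hc : Function.LeftInverse c e) :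
    ∃ σ : Finset Y, IsDominant r σ ∧ Set.SurjOn c σ Set.univ := by
  classical
  have := Fintype.ofFinite ι
  have := Fintype.ofFinite Y
  obtain ⟨i₀⟩ := ‹Nonempty ι›
  let τ₀ : Finset Y := (univ.erase i₀).image e
  have hτ₀ : Set.BijOn c τ₀ (univ.erase i₀ : Finset ι) := by
    rw [coe_image]
    have hinv := hc.leftInvOn (univ.erase i₀ : Finset ι)
    exact hinv.injOn.bijOn_image.symm ⟨hinv.rightInvOn_image, hinv⟩
  let ℛ : Finset (Finset Y) := {σ | IsDominant r σ ∧ #σ = Fintype.card ι}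
  suffices h : ∃ σ ∈ ℛ, σ.image c = univ by
    obtain ⟨σ, hσ, himage⟩ := h
    exact ⟨σ, ((mem_filter_univ σ).1 hσ).1, fun i _ =>
      mem_image.1 (himage.symm ▸ mem_univ i)⟩
  refine exists_image_eq_univ_of_odd_sum (i₀ := i₀)
    (fun σ hσ => ((mem_filter_univ σ).1 hσ).2) ?_
  have hrooms : ∀ τ ∈ ({τ | Set.BijOn c τ (univ.erase i₀ : Finset ι)} : Finset (Finset Y)),
      #{y | y ∉ τ ∧ insert y τ ∈ ℛ} = #{y | y ∉ τ ∧ IsDominant r (insert y τ)} := by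
    intro τ hτ
    have hcard : #τ + 1 = Fintype.card ι := by
      rw [((mem_filter_univ τ).1 hτ).finsetCard_eq, card_erase_add_one (mem_univ i₀), card_univ]
    refine congrArg card (filter_congr fun y _ => and_congr_right fun hy => ?_)
    rw [mem_filter_univ, card_insert_of_notMem hy]
    exact and_iff_left hcard
  rw [sum_congr rfl hrooms, ← sum_erase_add _ _ ((mem_filter_univ τ₀).2 hτ₀),
    he.card_filter_insert_image_eq_one hr hne]
  refine Even.add_one (even_sum _ fun τ hτ => ?_)
  obtain ⟨hne, hτ⟩ := mem_erase.1 hτ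
  exact he.even_card_filter_insert hr hc ((mem_filter_univ τ).1 hτ) hne

end Scarf

section FiniteChoice

variable {ι X α : Type*}

/-- The utilities `u` turned into injective rankings of `X` with one slack point `Sum.inl j`
adjoined for each `j`, as `IsSlack` requires. In ranking `i`, slack point `i` is `⊥`, the other
slack points lie above all of `X`, and ties of `u i` are broken lexicographically by an order
on `X`. -/
def slackRank [DecidableEq ι] (u : ι → X → α) (i : ι) : ι ⊕ X → WithBot (α ×ₗ X ⊕ₗ ι)
  | .inl j => if j = i then ⊥ else ↑(toLex (Sum.inr j : α ×ₗ X ⊕ ι))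
  | .inr x => ↑(toLex (Sum.inl (toLex (u i x, x)) : α ×ₗ X ⊕ ι))

theorem slackRank_injective [DecidableEq ι] (u : ι → X → α) (i : ι) :
    Function.Injective (slackRank u i) := by
  rintro (j | x) (k | y) h
  · simp only [slackRank] at h
    split_ifs at h <;> simp_all
  · simp only [slackRank] at h
    split_ifs at h <;> simp_all
  · simp only [slackRank] at h
    split_ifs at h <;> simp_all
  · simp_all [slackRank]

section

variable [LinearOrder ι] [LinearOrder X] [LinearOrder α] (u : ι → X → α)

theorem isSlack_slackRank : IsSlack (slackRank u) Sum.inl where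
  le i y := by simp [slackRank]
  lt {i j y} hij hy := by
    rcases y with k | x
    · exact absurd (Set.mem_range_self k) hy
    · simp [slackRank, hij]

variable {u} in
theorem slackRank_inr_le_inr {i : ι} {x y : X}
    (h : slackRank u i (Sum.inr x) ≤ slackRank u i (Sum.inr y)) : u i x ≤ u i y := by
  simp only [slackRank, WithBot.coe_le_coe, Sum.Lex.inl_le_inl_iff] at h
  exact Prod.Lex.monotone_fst _ _ h

theorem not_slackRank_inr_le_inl (i : ι) (x : X) :
    ¬ slackRank u i (Sum.inr x) ≤ slackRank u i (Sum.inl i) := by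
  simp [slackRank]

end

theorem exists_forall_exists_color_eq_and_le [Finite ι] [Finite X] [Nonempty X] [LinearOrder α]
    (u : ι → X → α) (c : X → ι) :
    ∃ z : ι → X, ∀ x, ∃ i, c (z i) = i ∧ ∀ j, u i x ≤ u i (z j) := by
  classical
  have := Fintype.ofFinite ι
  have := Fintype.ofFinite X
  let _ : LinearOrder ι := linearOrderOfSTO WellOrderingRel
  let _ : LinearOrder X := linearOrderOfSTO WellOrderingRel
  obtain ⟨x₀⟩ := ‹Nonempty X›
  have : Nonempty ι := ⟨c x₀⟩
  obtain ⟨σ, hσ, hsurj⟩ := (isSlack_slackRank u).exists_isDominant_surjOn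
    (slackRank_injective u) ⟨Sum.inr x₀, by simp⟩ (c := Sum.elim id c) (fun _ => rfl)
  have hdom : ∀ x, ∃ i, Sum.inl i ∉ σ ∧ ∀ s, Sum.inr s ∈ σ → u i x ≤ u i s := fun x =>
    (hσ (Sum.inr x)).imp fun i hi =>
      ⟨fun hiσ => not_slackRank_inr_le_inl u i x (hi _ hiσ),
        fun s hs => slackRank_inr_le_inr (hi _ hs)⟩
  have hcolor : ∀ i, Sum.inl i ∉ σ → ∃ s, Sum.inr s ∈ σ ∧ c s = i := by
    intro i hi
    obtain ⟨k | s, hmem, hk⟩ := hsurj (Set.mem_univ i)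
    · exact absurd (hk ▸ hmem) hi
    · exact ⟨s, hmem, hk⟩
  obtain ⟨s₀, hs₀⟩ : ∃ s, Sum.inr s ∈ σ := by
    obtain ⟨i, hi, -⟩ := hdom x₀
    exact (hcolor i hi).imp fun _ h => h.1
  have hz : ∀ i, ∃ s, Sum.inr s ∈ σ ∧ (Sum.inl i ∉ σ → c s = i) := by
    intro i
    by_cases hi : Sum.inl i ∈ σ
    · exact ⟨s₀, hs₀, fun h => absurd hi h⟩
    · exact (hcolor i hi).imp fun s hs => ⟨hs.1, fun _ => hs.2⟩
  choose z hzσ hzc using hz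
  exact ⟨z, fun x => (hdom x).imp fun i hi => ⟨hzc i hi.1, fun j => hi.2 _ (hzσ j)⟩⟩

end FiniteChoice

section Compact

theorem exists_forall_exists_mem_and_le {ι X α : Type*} [Finite ι] [TopologicalSpace X]
    [CompactSpace X] [Nonempty X] [TopologicalSpace α] [LinearOrder α] [OrderClosedTopology α]
    {u : ι → X → α} (hu : ∀ i, Continuous (u i)) {A : ι → Set X} (hA : ∀ i, IsClosed (A i))
    (hcover : ⋃ i, A i = Set.univ) :
    ∃ z : ι → X, ∀ x, ∃ i, z i ∈ A i ∧ ∀ j, u i x ≤ u i (z j) := by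
  classical
  let K (x : X) : Set (ι → X) := {z | ∃ i, z i ∈ A i ∧ ∀ j, u i x ≤ u i (z j)}
  suffices h : (⋂ x, K x).Nonempty by
    obtain ⟨z, hz⟩ := h
    exact ⟨z, Set.mem_iInter.1 hz⟩
  refine CompactSpace.iInter_nonempty (fun x => ?_) fun s => ?_
  · simp only [K, Set.ofPred_exists, Set.ofPred_and, Set.ofPred_forall]
    exact isClosed_iUnion_of_finite fun i => ((hA i).preimage (continuous_apply i)).inter <|
      isClosed_iInter fun j => isClosed_le continuous_const ((hu i).comp (continuous_apply j))
  · obtain ⟨x₀⟩ := ‹Nonempty X›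
    choose c hc using Set.iUnion_eq_univ_iff.1 hcover
    have : Nonempty ↥(insert x₀ s) := ⟨x₀, Finset.mem_insert_self x₀ s⟩
    obtain ⟨z, hz⟩ := exists_forall_exists_color_eq_and_le
      (fun i (x : ↥(insert x₀ s)) => u i x) fun x => c x
    refine ⟨fun i => z i, Set.mem_iInter₂.2 fun x hx => ?_⟩
    obtain ⟨i, hi, hle⟩ := hz ⟨x, Finset.mem_insert_of_mem hx⟩
    refine ⟨i, ?_, hle⟩
    have := hc (z i)
    rwa [hi] at this

end Compact

section Simplex

variable {ι : Type*} [Fintype ι]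

theorem exists_mem_stdSimplex_forall_lt {J : Finset ι} (hJ : J.Nonempty) {m : ι → ℝ}
    (hm : ∀ i, 0 ≤ m i) (hsum : ∑ i ∈ J, m i < 1) :
    ∃ x ∈ stdSimplex ℝ ι, ∀ i ∈ J, m i < x i := by
  classical
  let ε : ℝ := (1 - ∑ i ∈ J, m i) / J.card
  have hcard : (0 : ℝ) < J.card := by exact_mod_cast hJ.card_pos
  have hε : 0 < ε := div_pos (sub_pos.2 hsum) hcard
  refine ⟨fun i => if i ∈ J then m i + ε else 0, ⟨fun i => ?_, ?_⟩, fun i hi => ?_⟩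
  · have := hm i
    dsimp only
    split_ifs <;> positivity
  · rw [Finset.sum_ite_mem, Finset.univ_inter, Finset.sum_add_distrib, Finset.sum_const,
      nsmul_eq_mul, mul_div_cancel₀ _ hcard.ne', add_sub_cancel]
  · simp only [if_pos hi]
    exact lt_add_of_pos_right _ hε

theorem eq_indicator_of_mem_stdSimplex {J : Finset ι} {m w : ι → ℝ} (hw : w ∈ stdSimplex ℝ ι)
    (hle : ∀ i ∈ J, m i ≤ w i) (hsum : 1 ≤ ∑ i ∈ J, m i) : w = (J : Set ι).indicator m := by
  classical
  have hJ : ∑ i ∈ J, w i ≤ 1 :=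
    hw.2 ▸ Finset.sum_le_univ_sum_of_nonneg hw.1
  have hmw : ∀ i ∈ J, m i = w i :=
    (Finset.sum_eq_sum_iff_of_le hle).1 ((Finset.sum_le_sum hle).antisymm (hJ.trans hsum))
  funext i
  by_cases hi : i ∈ J
  · rw [Set.indicator_of_mem (Finset.mem_coe.2 hi), hmw i hi]
  · rw [Set.indicator_of_notMem (mt Finset.mem_coe.1 hi)]
    have hinsert : ∑ k ∈ insert i J, w k ≤ 1 :=
      hw.2 ▸ Finset.sum_le_univ_sum_of_nonneg hw.1
    rw [Finset.sum_insert hi, ← Finset.sum_congr rfl hmw] at hinsert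
    exact le_antisymm (by linarith) (hw.1 i)

theorem exists_eq_indicator_of_forall_exists_le {κ : Type*} [Finite κ] [Nonempty κ]
    {J : Finset ι} (hJ : J.Nonempty) {z : κ → stdSimplex ℝ ι}
    (hz : ∀ x : stdSimplex ℝ ι, ∃ i ∈ J, ∀ j, x i ≤ z j i) :
    ∃ m : ι → ℝ, ∀ j, (z j : ι → ℝ) = (J : Set ι).indicator m := by
  let m (i : ι) : ℝ := ⨅ j, z j i
  have hmz : ∀ i j, m i ≤ z j i := fun i j => ciInf_le (Set.finite_range _).bddBelow j
  have hsum : 1 ≤ ∑ i ∈ J, m i := by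
    by_contra! hlt
    obtain ⟨x, hx, hmx⟩ := exists_mem_stdSimplex_forall_lt hJ
      (fun i => le_ciInf fun j => stdSimplex.zero_le (z j) i) hlt
    obtain ⟨i, hi, hle⟩ := hz ⟨x, hx⟩
    exact (hmx i hi).not_ge (le_ciInf hle)
  exact ⟨m, fun j => eq_indicator_of_mem_stdSimplex (z j).2 (fun i _ => hmz i j) hsum⟩

variable [Nonempty ι]

theorem exists_stdSimplex_forall_pos_mem {A : ι → Set (stdSimplex ℝ ι)}
    (hA : ∀ i, IsClosed (A i)) (hcover : ⋃ i, A i = Set.univ) :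
    ∃ w : stdSimplex ℝ ι, ∀ i, 0 < w i → w ∈ A i := by
  classical
  have hcont (i : ι) : Continuous fun x : stdSimplex ℝ ι => x i :=
    (continuous_apply i).comp continuous_subtype_val
  obtain ⟨z, hz⟩ := exists_forall_exists_mem_and_le hcont hA hcover
  let J : Finset ι := {i | z i ∈ A i}
  have hzJ : ∀ x : stdSimplex ℝ ι, ∃ i ∈ J, ∀ j, x i ≤ z j i := by
    simpa only [J, Finset.mem_filter_univ] using hz
  obtain ⟨j₀⟩ := ‹Nonempty ι›
  obtain ⟨i₁, hi₁, -⟩ := hzJ (z j₀)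
  obtain ⟨m, hm⟩ := exists_eq_indicator_of_forall_exists_le ⟨i₁, hi₁⟩ hzJ
  refine ⟨z j₀, fun i hi => ?_⟩
  have hiJ : i ∈ J := by
    by_contra hiJ
    refine hi.ne' ?_
    exact (congrFun (hm j₀) i).trans (Set.indicator_of_notMem (mt Finset.mem_coe.1 hiJ) m)
  have hzi : z i = z j₀ := Subtype.ext ((hm i).trans (hm j₀).symm)
  exact hzi ▸ (Finset.mem_filter_univ i).1 hiJ

end Simplex

theorem stmt14_general {ι : Type*} [Fintype ι] [Nonempty ι] (C : ι → Set (ι → ℝ))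
    (hclosed : ∀ i, IsClosed (C i))
    (hcover : ∀ w ∈ stdSimplex ℝ ι, ∃ i, 0 < w i ∧ w ∈ C i) :
    (stdSimplex ℝ ι ∩ ⋂ i, C i).Nonempty := by
  classical
  have hne : ∀ i, (C i).Nonempty := by
    intro i
    obtain ⟨j, hj, hmem⟩ := hcover (Pi.single i 1) (single_mem_stdSimplex ℝ i)
    obtain rfl : j = i := by
      by_contra hji
      simp [hji] at hj
    exact ⟨_, hmem⟩
  let d (i : ι) (w : stdSimplex ℝ ι) : ℝ := Metric.infDist (w : ι → ℝ) (C i)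
  have hd (i : ι) : Continuous (d i) :=
    (Metric.continuous_infDist_pt _).comp continuous_subtype_val
  have hfarthest_closed (i : ι) : IsClosed {w | ∀ j, d j w ≤ d i w} := by
    simpa only [Set.ofPred_forall] using isClosed_iInter fun j => isClosed_le (hd j) (hd i)
  have hfarthest_cover : ⋃ i, {w | ∀ j, d j w ≤ d i w} = Set.univ :=
    Set.iUnion_eq_univ_iff.2 fun w => Finite.exists_max fun i => d i w
  obtain ⟨w, hw⟩ := exists_stdSimplex_forall_pos_mem hfarthest_closed hfarthest_cover
  obtain ⟨i, hi, hwi⟩ := hcover w w.2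
  have hd0 (j : ι) : d j w = 0 :=
    ((hw i hi j).trans (Metric.infDist_zero_of_mem hwi).le).antisymm Metric.infDist_nonneg
  exact ⟨w, w.2, Set.mem_iInter.2 fun j => ((hclosed j).mem_iff_infDist_zero (hne j)).2 (hd0 j)⟩

/-- Knaster–Kuratowski–Mazurkiewicz, support version: if closed
subsets `C 1, …, C n` of the standard simplex are such that every point `w` of
the simplex belongs to `C i` for some coordinate `i` in the support of `w`,
then the sets have a common point. -/
theorem stmt14 (n : ℕ) (C : Fin n → Set (Fin n → ℝ))
    (hsub : ∀ i, C i ⊆ stdSimplex ℝ (Fin n))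
    (hclosed : ∀ i, IsClosed (C i))
    (hcover : ∀ w ∈ stdSimplex ℝ (Fin n), ∃ i, 0 < w i ∧ w ∈ C i) :
    (⋂ i, C i).Nonempty := by
  rcases isEmpty_or_nonempty (Fin n) with _ | _
  · rw [Set.iInter_of_empty]; exact Set.univ_nonempty
  · exact (stmt14_general C hclosed hcover).right
end
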